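/- arXiv:1111.6782 — 2 statements merged into one kernel-verified Lean document; each statement's English description precedes it below -/
import Mathlib

section
/- Let α ∈ (2,3), λ > 0, n ≥ 2, and let γ ∈ H^{(α+1)/2,2}(ℝ/ℤ,ℝⁿ) be injective, parametrized by arc-length, and a stationary point of E^α + λL, i.e. δE^α(γ;h) + λ∫_{ℝ/ℤ} ⟨γ'(u),h'(u)⟩ du = 0 for all h ∈ H^{(1+α)/2,2}(ℝ/ℤ,ℝⁿ). Then γ ∈ H^{α−1/2−ε,2}(ℝ/ℤ,ℝⁿ) for every ε > 0. -/
open MeasureTheory Filter Set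
open scoped RealInnerProductSpace ENNReal Topology

noncomputable section

/-- `ℝⁿ` -/
abbrev Rn (n : ℕ) := EuclideanSpace ℝ (Fin n)

variable {n : ℕ}

/-- A 1-periodic curve is injective as a map on `ℝ/ℤ`. -/
def PerInjective (γ : ℝ → Rn n) : Prop :=
  ∀ u v : ℝ, γ u = γ v → ∃ k : ℤ, v = u + k

/-- `γ` is a regular curve: `γ'(u) ≠ 0` for all `u`. -/
def RegularCurve (γ : ℝ → Rn n) : Prop := ∀ u : ℝ, deriv γ u ≠ 0

/-- `γ` is parametrized by arc-length: `|γ'(u)| = 1` for all `u`. -/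
def ArcLengthParam (γ : ℝ → Rn n) : Prop := ∀ u : ℝ, ‖deriv γ u‖ = 1

/-- The length `L(γ) = ∫₀¹ |γ'(θ)| dθ` of the closed curve `γ`. -/
def curveLen (γ : ℝ → Rn n) : ℝ := ∫ θ in (0:ℝ)..1, ‖deriv γ θ‖

/-- The arc length `L(γ|_{[u,u+w]}) = |∫_u^{u+w} |γ'(θ)| dθ|`. -/
def arcLen (γ : ℝ → Rn n) (u w : ℝ) : ℝ := |∫ θ in u..(u + w), ‖deriv γ θ‖|

/-- The intrinsic distance `d_γ(u+w,u)`. -/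
def idist (γ : ℝ → Rn n) (u w : ℝ) : ℝ :=
  min (arcLen γ u w) (curveLen γ - arcLen γ u w)

/-- The integrand of the O'Hara energy `E^α`. -/
def ohIntegrand (α : ℝ) (γ : ℝ → Rn n) (u w : ℝ) : ℝ :=
  (1 / ‖γ (u + w) - γ u‖ ^ α - 1 / idist γ u w ^ α) * ‖deriv γ (u + w)‖ * ‖deriv γ u‖

/-- The O'Hara energy `E^α`, with values in `[0,∞]`. -/
def oharaE (α : ℝ) (γ : ℝ → Rn n) : ℝ≥0∞ :=
  ∫⁻ u in Ioc (0:ℝ) 1, ∫⁻ w in Ioo (-(1:ℝ)/2) (1/2), ENNReal.ofReal (ohIntegrand α γ u w)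

/-- The O'Hara energy `E^α` as a real number. -/
def oharaER (α : ℝ) (γ : ℝ → Rn n) : ℝ := (oharaE α γ).toReal

/-- `[−1/2,−ε] ∪ [ε,1/2]`, the `w`-section of `U_ε`. -/
def Wset (ε : ℝ) : Set ℝ := Icc (-(1:ℝ)/2) (-ε) ∪ Icc ε (1/2)

/-- The truncated O'Hara energy `E^α_ε`, an integral over `U_ε`. -/
def oharaEeps (α ε : ℝ) (γ : ℝ → Rn n) : ℝ :=
  ∫ u in Ioc (0:ℝ) 1, ∫ w in Wset ε, ohIntegrand α γ u w

/-- `F` has directional (Gâteaux) derivative `d` at `γ` in direction `h`. -/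
def HasDirDeriv (F : (ℝ → Rn n) → ℝ) (γ h : ℝ → Rn n) (d : ℝ) : Prop :=
  Tendsto (fun τ : ℝ => (F (γ + τ • h) - F γ) / τ) (𝓝[≠] (0:ℝ)) (𝓝 d)

/-- Squared Gagliardo seminorm `[f]²_{H^{s,2}}` of a 1-periodic map. -/
def gagliardoSq (s : ℝ) {E : Type*} [NormedAddCommGroup E] (f : ℝ → E) : ℝ≥0∞ :=
  ∫⁻ u in Ioc (0:ℝ) 1, ∫⁻ w in Ioo (-(1:ℝ)/2) (1/2),
    ENNReal.ofReal (‖f (u + w) - f u‖ ^ 2 / |w| ^ (1 + 2 * s))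

/-- Membership in the fractional Sobolev space `H^{1+σ,2}(ℝ/ℤ,ℝⁿ)`, `σ ∈ (0,1)`:
a 1-periodic `C¹` function whose derivative has finite Gagliardo seminorm of order `σ`. -/
def MemH1 (σ : ℝ) (γ : ℝ → Rn n) : Prop :=
  Function.Periodic γ 1 ∧ ContDiff ℝ 1 γ ∧ gagliardoSq σ (deriv γ) < ⊤

/-- The norm of `H^{1+σ,2}(ℝ/ℤ,ℝⁿ)`. -/
def H1Norm (σ : ℝ) (γ : ℝ → Rn n) : ℝ :=
  Real.sqrt (∫ u in Ioc (0:ℝ) 1, (‖γ u‖ ^ 2 + ‖deriv γ u‖ ^ 2)) +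
    Real.sqrt ((gagliardoSq σ (deriv γ)).toReal)

/-- Membership of a 1-periodic map in `L²(ℝ/ℤ)`. -/
def MemL2per {E : Type*} [NormedAddCommGroup E] (f : ℝ → E) : Prop :=
  Function.Periodic f 1 ∧ AEStronglyMeasurable f (volume : Measure ℝ) ∧
    IntegrableOn (fun u => ‖f u‖ ^ 2) (Ioc (0:ℝ) 1) volume

/-- Membership in the fractional Sobolev space `H^{s,2}(ℝ/ℤ)`, `s ∈ (0,1)`. -/
def MemHs0 (s : ℝ) {E : Type*} [NormedAddCommGroup E] (f : ℝ → E) : Prop :=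
  MemL2per f ∧ gagliardoSq s f < ⊤

/-- The norm of `H^{s,2}(ℝ/ℤ)` for `s ∈ (0,1)`: `‖f‖_{L²} + [f]_{H^{s,2}}`. -/
def Hs0Norm (s : ℝ) {E : Type*} [NormedAddCommGroup E] (f : ℝ → E) : ℝ :=
  Real.sqrt (∫ u in Ioc (0:ℝ) 1, ‖f u‖ ^ 2) + Real.sqrt ((gagliardoSq s f).toReal)

/-- The `k`-th Fourier coefficient (`j`-th component) of a 1-periodic curve. -/
def fCoef (γ : ℝ → Rn n) (k : ℤ) (j : Fin n) : ℂ :=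
  ∫ u in (0:ℝ)..1, (γ u j : ℂ) * Complex.exp ((-2) * (Real.pi : ℂ) * Complex.I * (k : ℂ) * (u : ℂ))

/-- Membership in `H^{s,2}(ℝ/ℤ,ℝⁿ)` via the Fourier characterization:
`((1+|k|²)^{s/2} γ̂(k))_k ∈ ℓ²`. -/
def MemHF (s : ℝ) (γ : ℝ → Rn n) : Prop :=
  Function.Periodic γ 1 ∧ Continuous γ ∧
    Summable (fun k : ℤ => (1 + (k : ℝ) ^ 2) ^ s * ∑ j, ‖fCoef γ k j‖ ^ 2)

/-- The squared Fourier norm of `H^{s,2}(ℝ/ℤ,ℝⁿ)`. -/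
def fNormSq (s : ℝ) (γ : ℝ → Rn n) : ℝ :=
  ∑' k : ℤ, (1 + (k : ℝ) ^ 2) ^ s * ∑ j, ‖fCoef γ k j‖ ^ 2

/-- C¹-norm of a 1-periodic map. -/
def c1Norm (f : ℝ → Rn n) : ℝ := ⨆ u : Icc (0:ℝ) 1, (‖f u.1‖ + ‖deriv f u.1‖)

/-- The integrand of `Q(γ,h)`. -/
def Qintegrand (α : ℝ) (γ h : ℝ → Rn n) (u w : ℝ) : ℝ :=
  ⟪deriv γ u, deriv h u⟫ / |w| ^ α
    - ⟪γ (u + w) - γ u, h (u + w) - h u⟫ / |w| ^ (α + 2)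

/-- The integrand of `R(γ,h)`. -/
def Rintegrand (α : ℝ) (γ h : ℝ → Rn n) (u w : ℝ) : ℝ :=
  2 * ⟪deriv γ u, deriv h u⟫ * (1 / ‖γ (u + w) - γ u‖ ^ α - 1 / |w| ^ α)
    - α * ⟪γ (u + w) - γ u, h (u + w) - h u⟫ *
        (1 / ‖γ (u + w) - γ u‖ ^ (α + 2) - 1 / |w| ^ (α + 2))

/-- `R(γ,h)`, an absolutely convergent double integral over `(ℝ/ℤ) × [−1/2,1/2]`. -/
def Rval (α : ℝ) (γ h : ℝ → Rn n) : ℝ :=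
  ∫ p in (Ioc (0:ℝ) 1) ×ˢ (Icc (-(1:ℝ)/2) (1/2)), Rintegrand α γ h p.1 p.2

/-- The `k`-th Fourier coefficient of a complex function on `[0,1]`. -/
def fc (F : ℝ → ℂ) (k : ℤ) : ℂ :=
  ∫ u in (0:ℝ)..1, F u * Complex.exp ((-2) * (Real.pi : ℂ) * Complex.I * (k : ℂ) * (u : ℂ))

lemma fc_eq_fourierCoeffOn (F : ℝ → ℂ) (k : ℤ) :
    fourierCoeffOn (zero_lt_one' ℝ) F k = fc F k := by
  rw [fourierCoeffOn_eq_integral, fc]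
  simp only [sub_zero, div_one, one_smul]
  congr 1
  ext u
  rw [fourier_coe_apply, smul_eq_mul, mul_comm]
  congr 2
  push_cast
  ring

lemma hasSum_sq_fc {F : ℝ → ℂ} (hF : Continuous F) :
    HasSum (fun k => ‖fc F k‖ ^ 2) (∫ u in (0:ℝ)..1, ‖F u‖ ^ 2) := by
  have hL : MemLp F 2 (volume.restrict (Ioc (0:ℝ) 1)) := by
    rw [memLp_two_iff_integrable_sq_norm hF.aestronglyMeasurable]
    exact ((hF.norm.pow 2).intervalIntegrable 0 1).1
  have h := hasSum_sq_fourierCoeffOn (zero_lt_one' ℝ) hL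
  simpa [fc_eq_fourierCoeffOn] using h

lemma exp_character_add_int (k m : ℤ) (u : ℝ) :
    Complex.exp ((-2) * (Real.pi : ℂ) * Complex.I * (k : ℂ) * ((u + m : ℝ) : ℂ)) =
      Complex.exp ((-2) * (Real.pi : ℂ) * Complex.I * (k : ℂ) * (u : ℂ)) := by
  rw [Complex.exp_eq_exp_iff_exists_int]
  refine ⟨-(k * m), ?_⟩
  push_cast
  ring

lemma fc_comp_add {F : ℝ → ℂ} (hP : Function.Periodic F 1) (w : ℝ) (k : ℤ) :
    fc (fun u => F (u + w)) k =
      Complex.exp ((-2) * (Real.pi : ℂ) * Complex.I * (k : ℂ) * ((-w : ℝ) : ℂ)) * fc F k := by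
  set g : ℝ → ℂ := fun u =>
    F u * Complex.exp ((-2) * (Real.pi : ℂ) * Complex.I * (k : ℂ) * (u : ℂ)) with hg
  have hgP : Function.Periodic g 1 := by
    intro u
    have := exp_character_add_int k 1 u
    simp only [Int.cast_one] at this
    simp only [hg, hP u, this]
  have h1 : fc F k = ∫ u in w..(w + 1), g u := by
    rw [hgP.intervalIntegral_add_eq w 0, zero_add]; rfl
  have h2 : ∫ u in (0:ℝ)..1, g (u + w) = ∫ u in w..(w + 1), g u := by
    rw [intervalIntegral.integral_comp_add_right, zero_add, add_comm]
  rw [h1, ← h2, fc, ← intervalIntegral.integral_const_mul]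
  congr 1
  ext u
  simp only [hg]
  rw [mul_left_comm, ← Complex.exp_add]
  congr 2
  push_cast
  ring

lemma fc_translate_sub {F : ℝ → ℂ} (hF : Continuous F) (hP : Function.Periodic F 1)
    (w : ℝ) (k : ℤ) :
    ‖fc (fun u => F (u + w) - F u) k‖ ^ 2 =
      (2 - 2 * Real.cos (2 * Real.pi * k * w)) * ‖fc F k‖ ^ 2 := by
  have h1 : fc (fun u => F (u + w) - F u) k = fc (fun u => F (u + w)) k - fc F k := by
    unfold fc
    rw [← intervalIntegral.integral_sub]
    · simp only [sub_mul]
    · exact Continuous.intervalIntegrable (by fun_prop) _ _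
    · exact Continuous.intervalIntegrable (by fun_prop) _ _
  have h2 : (-2) * (Real.pi : ℂ) * Complex.I * (k : ℂ) * ((-w : ℝ) : ℂ) =
      ((2 * Real.pi * k * w : ℝ) : ℂ) * Complex.I := by push_cast; ring
  rw [h1, fc_comp_add hP, h2, ← sub_one_mul, norm_mul, mul_pow]
  congr 1
  rw [Complex.exp_mul_I, ← Complex.ofReal_cos, ← Complex.ofReal_sin, Complex.sq_norm,
    Complex.normSq_apply]
  simp only [Complex.sub_re, Complex.add_re, Complex.ofReal_re, Complex.mul_re, Complex.I_re,
    mul_zero, Complex.ofReal_im, Complex.I_im, mul_one, sub_self, add_zero, Complex.one_re,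
    Complex.sub_im, Complex.add_im, Complex.mul_im, Complex.one_im, zero_add, sub_zero]
  nlinarith [Real.sin_sq_add_cos_sq (2 * Real.pi * k * w)]

lemma fc_deriv {F F' : ℝ → ℂ} (hd : ∀ u, HasDerivAt F (F' u) u) (hc : Continuous F')
    (hP : Function.Periodic F 1) (k : ℤ) :
    fc F' k = 2 * Real.pi * Complex.I * k * fc F k := by
  have hv : ∀ u : ℝ, HasDerivAt
      (fun u : ℝ => Complex.exp ((-2) * (Real.pi : ℂ) * Complex.I * (k : ℂ) * (u : ℂ)))
      (((-2) * (Real.pi : ℂ) * Complex.I * (k : ℂ)) *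
        Complex.exp ((-2) * (Real.pi : ℂ) * Complex.I * (k : ℂ) * (u : ℂ))) u := by
    intro u
    have h := (((hasDerivAt_id (u : ℂ)).const_mul
      ((-2) * (Real.pi : ℂ) * Complex.I * (k : ℂ))).cexp).comp_ofReal
    simpa [mul_comm] using h
  have h := intervalIntegral.integral_deriv_mul_eq_sub (a := 0) (b := 1)
    (fun u _ => hd u) (fun u _ => hv u) (hc.intervalIntegrable _ _)
    (Continuous.intervalIntegrable (by fun_prop) _ _)
  have hFc : Continuous F := continuous_iff_continuousAt.2 fun u => (hd u).continuousAt
  rw [intervalIntegral.integral_add (Continuous.intervalIntegrable (by fun_prop) _ _)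
    (Continuous.intervalIntegrable (by fun_prop) _ _)] at h
  have hF01 : F 1 = F 0 := by simpa using hP 0
  have he : Complex.exp ((-2) * (Real.pi : ℂ) * Complex.I * (k : ℂ) * ((1:ℝ) : ℂ)) =
      Complex.exp ((-2) * (Real.pi : ℂ) * Complex.I * (k : ℂ) * ((0:ℝ) : ℂ)) := by
    simpa using exp_character_add_int k 1 0
  rw [hF01, he, sub_self] at h
  have h2 : ∫ u in (0:ℝ)..1, F u * (((-2) * (Real.pi : ℂ) * Complex.I * (k : ℂ)) *
        Complex.exp ((-2) * (Real.pi : ℂ) * Complex.I * (k : ℂ) * (u : ℂ))) =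
      ((-2) * (Real.pi : ℂ) * Complex.I * (k : ℂ)) * fc F k := by
    rw [fc, ← intervalIntegral.integral_const_mul]
    congr 1
    ext u
    ring
  rw [h2] at h
  change fc F' k + _ = 0 at h
  linear_combination h

lemma exists_continuous_deriv_of_summable_fc {f : ℝ → ℝ} (hf : Continuous f)
    (hP : Function.Periodic f 1)
    (hs : Summable fun k : ℤ => (1 + |(k : ℝ)|) * ‖fc (fun u => (f u : ℂ)) k‖) :
    ∃ g : ℝ → ℝ, Continuous g ∧ ∀ u, HasDerivAt f (g u) u := by
  have : Fact ((0:ℝ) < 1) := ⟨one_pos⟩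
  set F : ℝ → ℂ := fun u => (f u : ℂ) with hFdef
  have hFP : Function.Periodic F 1 := fun u => by simp only [hFdef, hP u]
  have hFc : Continuous F := by fun_prop
  let G : C(AddCircle (1:ℝ), ℂ) :=
    ⟨hFP.lift, continuous_coinduced_dom.mpr hFc⟩
  have hGc : ∀ k, fourierCoeff G k = fc F k := by
    intro k
    rw [fourierCoeff_eq_intervalIntegral _ _ 0, fc]
    simp only [zero_add, div_one, one_smul]
    congr 1
    ext u
    rw [fourier_coe_apply, smul_eq_mul, mul_comm]
    change F u * _ = _
    congr 2
    push_cast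
    ring
  have hs0 : Summable fun k : ℤ => ‖fc F k‖ := by
    refine Summable.of_nonneg_of_le (fun k => norm_nonneg _) (fun k => ?_) hs
    nlinarith [abs_nonneg (k : ℝ), norm_nonneg (fc F k)]
  have hsum : ∀ u : ℝ, HasSum (fun k : ℤ => fc F k * fourier k (u : AddCircle (1:ℝ))) (F u) := by
    intro u
    have h1 : Summable (fourierCoeff G) := by
      have : fourierCoeff G = fc F := funext hGc
      rw [this]; exact hs0.of_norm
    have h := has_pointwise_sum_fourier_series_of_summable h1 (u : AddCircle (1:ℝ))
    simp only [hGc, smul_eq_mul] at h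
    exact h
  have hd : ∀ (k : ℤ) (u : ℝ), HasDerivAt (fun u : ℝ => fc F k * fourier k (u : AddCircle (1:ℝ)))
      (fc F k * (2 * Real.pi * Complex.I * k / (1:ℝ) * fourier k (u : AddCircle (1:ℝ)))) u :=
    fun k u => (hasDerivAt_fourier 1 k u).const_mul _
  have hbound : ∀ (k : ℤ) (u : ℝ),
      ‖fc F k * (2 * Real.pi * Complex.I * k / (1:ℝ) * fourier k (u : AddCircle (1:ℝ)))‖ ≤
        2 * Real.pi * ((1 + |(k : ℝ)|) * ‖fc F k‖) := by
    intro k u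
    have h1 : ‖fourier k (u : AddCircle (1:ℝ))‖ = 1 := by
      rw [fourier_apply, Circle.norm_coe]
    rw [norm_mul, norm_mul, h1]
    simp only [Complex.ofReal_one, div_one, norm_mul, Complex.norm_I, Complex.norm_intCast,
      mul_one, Complex.norm_real, Real.norm_eq_abs, abs_of_pos Real.pi_pos, Complex.norm_ofNat]
    have : 0 ≤ Real.pi * ‖fc F k‖ := by positivity
    nlinarith [abs_nonneg (k : ℝ)]
  have hsb : Summable fun k : ℤ => 2 * Real.pi * ((1 + |(k : ℝ)|) * ‖fc F k‖) := hs.mul_left _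
  set g : ℝ → ℂ := fun u => ∑' k : ℤ,
    fc F k * (2 * Real.pi * Complex.I * k / (1:ℝ) * fourier k (u : AddCircle (1:ℝ)))
  have hgc : Continuous g := by
    refine continuous_tsum (fun k => ?_) hsb (fun k u => hbound k u)
    have : Continuous fun u : ℝ => fourier k (u : AddCircle (1:ℝ)) :=
      (fourier k).continuous.comp (AddCircle.continuous_mk' 1)
    fun_prop
  have hder : ∀ u, HasDerivAt F (g u) u := by
    intro u
    have h := hasDerivAt_tsum hsb hd hbound (y₀ := 0) (hsum 0).summable u
    have he : (fun z : ℝ => ∑' k : ℤ, fc F k * fourier k (z : AddCircle (1:ℝ))) = F :=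
      funext fun z => (hsum z).tsum_eq
    rwa [he] at h
  refine ⟨fun u => (g u).re, by fun_prop, fun u => ?_⟩
  exact Complex.reCLM.hasFDerivAt.comp_hasDerivAt u (hder u)

/-- Parseval's identity for the quadratic form measuring the deviation of `f` from being affine
at scale `w`. -/
lemma hasSum_deviation {f g : ℝ → ℝ} (hd : ∀ u, HasDerivAt f (g u) u) (hg : Continuous g)
    (hP : Function.Periodic f 1) (w : ℝ) :
    HasSum (fun k : ℤ => ‖fc (fun u => (f u : ℂ)) k‖ ^ 2 *
        ((2 * Real.pi * k * w) ^ 2 - 2 + 2 * Real.cos (2 * Real.pi * k * w)))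
      (∫ u in (0:ℝ)..1, (w ^ 2 * g u ^ 2 - (f (u + w) - f u) ^ 2)) := by
  have hfc : Continuous f := continuous_iff_continuousAt.2 fun u => (hd u).continuousAt
  have hP' : Function.Periodic (fun u => (f u : ℂ)) 1 := fun u => by simp only [hP u]
  have h1 := hasSum_sq_fc (F := fun u => (g u : ℂ)) (by fun_prop)
  have h2 := hasSum_sq_fc (F := fun u => (f (u + w) : ℂ) - (f u : ℂ)) (by fun_prop)
  have h3 : ∀ k, fc (fun u => (g u : ℂ)) k =
      2 * Real.pi * Complex.I * k * fc (fun u => (f u : ℂ)) k :=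
    fc_deriv (fun u => (hd u).ofReal_comp) (by fun_prop) hP'
  have h4 : ∀ k, ‖fc (fun u => (f (u + w) : ℂ) - (f u : ℂ)) k‖ ^ 2 = _ :=
    fc_translate_sub (F := fun u => (f u : ℂ)) (by fun_prop) hP' w
  have h := (h1.mul_left (w ^ 2)).sub h2
  have hk : (fun k : ℤ => ‖fc (fun u => (f u : ℂ)) k‖ ^ 2 *
      ((2 * Real.pi * k * w) ^ 2 - 2 + 2 * Real.cos (2 * Real.pi * k * w))) =
      fun k => w ^ 2 * ‖fc (fun u => (g u : ℂ)) k‖ ^ 2 -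
        ‖fc (fun u => (f (u + w) : ℂ) - (f u : ℂ)) k‖ ^ 2 := by
    ext k
    rw [h3, h4]
    simp only [norm_mul, Complex.norm_I, Complex.norm_intCast,
      mul_one, Complex.norm_real, Real.norm_eq_abs, Complex.norm_ofNat, mul_pow, sq_abs]
    ring
  have hI : ∫ u in (0:ℝ)..1, (w ^ 2 * g u ^ 2 - (f (u + w) - f u) ^ 2) =
      w ^ 2 * (∫ u in (0:ℝ)..1, ‖(g u : ℂ)‖ ^ 2) -
        ∫ u in (0:ℝ)..1, ‖(f (u + w) : ℂ) - (f u : ℂ)‖ ^ 2 := by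
    rw [← intervalIntegral.integral_const_mul, ← intervalIntegral.integral_sub]
    · simp only [← Complex.ofReal_sub, Complex.norm_real, Real.norm_eq_abs, sq_abs]
    · exact Continuous.intervalIntegrable (by fun_prop) _ _
    · exact Continuous.intervalIntegrable (by fun_prop) _ _
  rw [hk, hI]
  exact h

lemma integrable_comp_abs {f : ℝ → ℝ} (hf : IntegrableOn f (Ioi 0)) :
    Integrable fun x : ℝ => f |x| := by
  have h1 : IntegrableOn (fun x => f |x|) (Ioi 0) :=
    hf.congr_fun (fun x hx => by rw [abs_of_pos hx]) measurableSet_Ioi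
  have h2 : IntegrableOn (fun x => f |x|) (Iic 0) := by
    rw [← Measure.map_neg_eq_self (volume : Measure ℝ)]
    have m : MeasurableEmbedding fun x : ℝ => -x := (Homeomorph.neg ℝ).measurableEmbedding
    rw [m.integrableOn_map_iff]
    simp_rw [Function.comp_def, abs_neg, neg_preimage, neg_Iic, neg_zero]
    exact (integrableOn_Ici_iff_integrableOn_Ioi).2 h1
  rw [← integrableOn_univ, ← Iic_union_Ioi (a := (0:ℝ))]
  exact h2.union h1

/-- The defect of the quadratic approximation of the cosine. -/
def cosDefect (z : ℝ) : ℝ := z ^ 2 - 2 + 2 * Real.cos z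

lemma continuous_cosDefect : Continuous cosDefect := by unfold cosDefect; fun_prop

lemma cosDefect_nonneg (z : ℝ) : 0 ≤ cosDefect z := by
  have := Real.one_sub_sq_div_two_le_cos (x := z)
  unfold cosDefect; linarith

lemma cosDefect_pos {z : ℝ} (hz : z ≠ 0) : 0 < cosDefect z := by
  have := Real.one_sub_sq_div_two_lt_cos hz
  unfold cosDefect; linarith

lemma cosDefect_le_sq (z : ℝ) : cosDefect z ≤ z ^ 2 := by
  have := Real.cos_le_one z
  unfold cosDefect; linarith

lemma cosDefect_le_pow_four (z : ℝ) : cosDefect z ≤ z ^ 4 := by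
  rcases le_or_gt |z| 1 with h | h
  · have h1 := (abs_le.1 (Real.cos_bound h)).2
    have h2 : |z| ^ 4 = z ^ 4 := by rw [show 4 = 2 * 2 from rfl, pow_mul, sq_abs, ← pow_mul]
    rw [h2] at h1
    have : 0 ≤ z ^ 4 := by positivity
    unfold cosDefect; linarith
  · have h1 : 1 ≤ z ^ 2 := by
      rw [← sq_abs]; nlinarith
    have := cosDefect_le_sq z
    nlinarith

lemma cosDefect_abs (z : ℝ) : cosDefect |z| = cosDefect z := by
  unfold cosDefect; rw [sq_abs, Real.cos_abs]

/-- The kernel producing the Fourier multiplier of the leading part of the first variation. -/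
def kernelDefect (α s : ℝ) : ℝ := |s| ^ (-(α + 2)) * cosDefect (2 * Real.pi * s)

lemma measurable_kernelDefect (α : ℝ) : Measurable (kernelDefect α) := by
  have := continuous_cosDefect.measurable
  unfold kernelDefect
  fun_prop

lemma kernelDefect_nonneg (α s : ℝ) : 0 ≤ kernelDefect α s :=
  mul_nonneg (Real.rpow_nonneg (abs_nonneg _) _) (cosDefect_nonneg _)

lemma kernelDefect_abs (α s : ℝ) : kernelDefect α |s| = kernelDefect α s := by
  unfold kernelDefect
  rw [abs_abs, ← cosDefect_abs (2 * Real.pi * s), abs_mul,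
    abs_of_pos (show (0:ℝ) < 2 * Real.pi by positivity)]

lemma integrable_kernelDefect {α : ℝ} (hα : α ∈ Ioo (2:ℝ) 3) : Integrable (kernelDefect α) := by
  have h2 : ∀ s : ℝ, 0 < s → s ^ (-(α + 2)) * s ^ 2 = s ^ (-α) := by
    intro s hs
    rw [← Real.rpow_natCast s 2, ← Real.rpow_add hs]
    congr 1; push_cast; ring
  have h4 : ∀ s : ℝ, 0 < s → s ^ (-(α + 2)) * s ^ 4 = s ^ (2 - α) := by
    intro s hs
    rw [← Real.rpow_natCast s 4, ← Real.rpow_add hs]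
    congr 1; push_cast; ring
  have hI : IntegrableOn (kernelDefect α) (Ioi 0) := by
    rw [← Ioc_union_Ioi_eq_Ioi zero_le_one]
    refine IntegrableOn.union ?_ ?_
    · have hr : IntegrableOn (fun s : ℝ => (2 * Real.pi) ^ 4 * s ^ (2 - α)) (Ioc 0 1) :=
        ((intervalIntegral.intervalIntegrable_rpow' (a := 0) (b := 1)
          (by linarith [hα.2] : -1 < 2 - α)).const_mul _).1
      refine Integrable.mono' hr (measurable_kernelDefect α).aestronglyMeasurable ?_
      refine (ae_restrict_iff' measurableSet_Ioc).2 (ae_of_all _ fun s hs => ?_)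
      rw [Real.norm_of_nonneg (kernelDefect_nonneg _ _), kernelDefect, abs_of_pos hs.1,
        ← h4 s hs.1]
      calc _ ≤ s ^ (-(α + 2)) * (2 * Real.pi * s) ^ 4 := by
            have := Real.rpow_nonneg hs.1.le (-(α + 2))
            gcongr
            exact cosDefect_le_pow_four _
        _ = _ := by ring
    · have hr : IntegrableOn (fun s : ℝ => (2 * Real.pi) ^ 2 * s ^ (-α)) (Ioi 1) :=
        (integrableOn_Ioi_rpow_of_lt (by linarith [hα.1]) one_pos).const_mul _
      refine Integrable.mono' hr (measurable_kernelDefect α).aestronglyMeasurable ?_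
      refine (ae_restrict_iff' measurableSet_Ioi).2 (ae_of_all _ fun s hs => ?_)
      have hs0 : 0 < s := one_pos.trans hs
      rw [Real.norm_of_nonneg (kernelDefect_nonneg _ _), kernelDefect, abs_of_pos hs0,
        ← h2 s hs0]
      calc _ ≤ s ^ (-(α + 2)) * (2 * Real.pi * s) ^ 2 := by
            have := Real.rpow_nonneg hs0.le (-(α + 2))
            gcongr
            exact cosDefect_le_sq _
        _ = _ := by ring
  simpa only [kernelDefect_abs] using integrable_comp_abs hI

/-- The Fourier multiplier of the leading part of the first variation. -/
def multiplier (α k : ℝ) : ℝ :=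
  ∫ w in Ioo (-(1:ℝ) / 2) (1 / 2), |w| ^ (-(α + 2)) * cosDefect (2 * Real.pi * k * w)

lemma scaled_kernelDefect (α : ℝ) {k : ℝ} (hk : 0 < k) (w : ℝ) :
    |w| ^ (-(α + 2)) * cosDefect (2 * Real.pi * k * w) = k ^ (α + 2) * kernelDefect α (k * w) := by
  unfold kernelDefect
  rw [abs_mul, abs_of_pos hk, Real.mul_rpow hk.le (abs_nonneg _), Real.rpow_neg hk.le,
    mul_assoc (2 * Real.pi) k w]
  have : k ^ (α + 2) ≠ 0 := (Real.rpow_pos_of_pos hk _).ne'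
  field_simp

lemma integrable_scaled_kernelDefect {α : ℝ} (hα : α ∈ Ioo (2:ℝ) 3) (k : ℝ) :
    Integrable fun w => |w| ^ (-(α + 2)) * cosDefect (2 * Real.pi * k * w) := by
  rcases lt_trichotomy k 0 with hk | hk | hk
  · have : (fun w => |w| ^ (-(α + 2)) * cosDefect (2 * Real.pi * k * w)) =
        fun w => (-k) ^ (α + 2) * kernelDefect α ((-k) * w) := by
      ext w
      rw [← scaled_kernelDefect α (neg_pos.2 hk), ← cosDefect_abs,
        ← cosDefect_abs (2 * Real.pi * -k * w)]
      congr 2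
      rw [mul_neg, neg_mul, abs_neg]
    rw [this]
    exact ((integrable_kernelDefect hα).comp_mul_left' (neg_pos.2 hk).ne').const_mul _
  · simp [hk, cosDefect]
  · simp only [scaled_kernelDefect α hk]
    exact ((integrable_kernelDefect hα).comp_mul_left' hk.ne').const_mul _

lemma multiplier_eq (α : ℝ) {k : ℝ} (hk : 0 < k) :
    multiplier α k = k ^ (α + 1) * ∫ s in (-(k / 2))..(k / 2), kernelDefect α s := by
  unfold multiplier
  simp only [scaled_kernelDefect α hk]
  rw [← integral_Ioc_eq_integral_Ioo, ← intervalIntegral.integral_of_le (by norm_num),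
    intervalIntegral.integral_const_mul, intervalIntegral.integral_comp_mul_left _ hk.ne',
    show k * (-1 / 2) = -(k / 2) by ring, show k * (1 / 2) = k / 2 by ring,
    show α + 2 = (α + 1) + 1 by ring, Real.rpow_add_one hk.ne', smul_eq_mul]
  field_simp

lemma multiplier_neg (α k : ℝ) : multiplier α (-k) = multiplier α k := by
  unfold multiplier
  congr 1
  ext w
  rw [← cosDefect_abs, ← cosDefect_abs (2 * Real.pi * k * w), mul_neg, neg_mul, abs_neg]

lemma multiplier_nonneg (α k : ℝ) : 0 ≤ multiplier α k :=
  integral_nonneg fun _ => mul_nonneg (Real.rpow_nonneg (abs_nonneg _) _) (cosDefect_nonneg _)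

lemma exists_multiplier_le {α : ℝ} (hα : α ∈ Ioo (2:ℝ) 3) :
    ∃ C, 0 ≤ C ∧ ∀ k : ℝ, multiplier α k ≤ C * |k| ^ (α + 1) := by
  have hpos : ∀ k : ℝ, 0 < k → multiplier α k ≤ (∫ s, kernelDefect α s) * k ^ (α + 1) := by
    intro k hk
    rw [multiplier_eq α hk, mul_comm]
    gcongr
    rw [intervalIntegral.integral_of_le (by linarith)]
    exact setIntegral_le_integral (integrable_kernelDefect hα)
      (ae_of_all _ (kernelDefect_nonneg α))
  refine ⟨∫ s, kernelDefect α s, integral_nonneg (kernelDefect_nonneg α), fun k => ?_⟩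
  rcases lt_trichotomy k 0 with hk | hk | hk
  · rw [← multiplier_neg, abs_of_neg hk]
    exact hpos _ (neg_pos.2 hk)
  · have h0 : (0:ℝ) ^ (α + 1) = 0 := Real.zero_rpow (by linarith [hα.1])
    simp [hk, multiplier, cosDefect, h0]
  · rw [abs_of_pos hk]
    exact hpos _ hk

lemma exists_le_multiplier {α : ℝ} (hα : α ∈ Ioo (2:ℝ) 3) :
    ∃ c, 0 < c ∧ ∀ k : ℝ, 1 ≤ k → c * k ^ (α + 1) ≤ multiplier α k := by
  have hint := integrable_kernelDefect hα
  refine ⟨∫ s in (0:ℝ)..(1 / 2), kernelDefect α s, ?_, fun k hk => ?_⟩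
  · refine intervalIntegral.intervalIntegral_pos_of_pos_on hint.intervalIntegrable
      (fun x hx => ?_) (by norm_num)
    have hx0 : x ≠ 0 := hx.1.ne'
    exact mul_pos (Real.rpow_pos_of_pos (abs_pos.2 hx0) _)
      (cosDefect_pos (mul_ne_zero (by positivity) hx0))
  · have hk0 : 0 < k := by linarith
    rw [multiplier_eq α hk0, mul_comm]
    gcongr
    refine intervalIntegral.integral_mono_interval (by linarith) (by linarith) (by linarith)
      (ae_of_all _ (kernelDefect_nonneg α)) hint.intervalIntegrable

lemma summable_of_le_abs_rpow {f : ℤ → ℝ} {b C : ℝ} (hb : 1 < b) (h0 : ∀ k, 0 ≤ f k)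
    (h : ∀ k ≠ 0, f k ≤ C * |(k : ℝ)| ^ (-b)) : Summable f := by
  refine Summable.of_norm_bounded_eventually
    ((Real.summable_abs_int_rpow hb).mul_left C) ?_
  rw [eventually_cofinite]
  refine (Set.finite_singleton (0:ℤ)).subset fun k hk => ?_
  by_contra hk0
  apply hk
  rw [Real.norm_of_nonneg (h0 k)]
  exact h k hk0

lemma abs_rpow_two_mul_le (k : ℤ) {q : ℝ} (hq : 0 ≤ q) :
    |(k : ℝ)| ^ (2 * q) ≤ (1 + (k : ℝ) ^ 2) ^ q := by
  rw [Real.rpow_mul (abs_nonneg _), Real.rpow_two, sq_abs]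
  gcongr
  linarith

lemma one_add_sq_rpow_le {k : ℤ} (hk : k ≠ 0) {q : ℝ} (hq : 0 ≤ q) :
    (1 + (k : ℝ) ^ 2) ^ q ≤ 2 ^ q * |(k : ℝ)| ^ (2 * q) := by
  rw [Real.rpow_mul (abs_nonneg _), Real.rpow_two, sq_abs, ← Real.mul_rpow (by norm_num) (sq_nonneg _)]
  gcongr
  have : (1:ℝ) ≤ (k:ℝ) ^ 2 := by
    have : 1 ≤ k ^ 2 := by have := sq_pos_of_ne_zero hk; omega
    exact_mod_cast this
  linarith

lemma MemHF.summable_component {s : ℝ} {γ : ℝ → Rn n} (hγ : MemHF s γ) (j : Fin n) :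
    Summable fun k : ℤ => (1 + (k : ℝ) ^ 2) ^ s * ‖fCoef γ k j‖ ^ 2 := by
  refine Summable.of_nonneg_of_le (fun k => by positivity) (fun k => ?_) hγ.2.2
  gcongr
  exact Finset.single_le_sum (f := fun j => ‖fCoef γ k j‖ ^ 2)
    (fun _ _ => sq_nonneg _) (Finset.mem_univ j)

lemma MemHF.summable_mul_norm_fCoef {s : ℝ} (hs : 3 / 2 < s) {γ : ℝ → Rn n} (hγ : MemHF s γ)
    (j : Fin n) : Summable fun k : ℤ => (1 + |(k : ℝ)|) * ‖fCoef γ k j‖ := by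
  have h2 : Summable fun k : ℤ => (1 + (k : ℝ) ^ 2) ^ (1 - s) := by
    refine summable_of_le_abs_rpow (b := 2 * (s - 1)) (C := 1) (by linarith)
      (fun k => by positivity) fun k hk => ?_
    have hk' : 0 < |(k : ℝ)| := abs_pos.2 (by exact_mod_cast hk)
    rw [one_mul, Real.rpow_neg hk'.le, show 1 - s = -(s - 1) by ring,
      Real.rpow_neg (by positivity)]
    exact inv_anti₀ (by positivity) (abs_rpow_two_mul_le k (by linarith))
  refine Summable.of_nonneg_of_le (fun k => by positivity) (fun k => ?_)
    ((hγ.summable_component j).add h2)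
  set x := ‖fCoef γ k j‖
  set q : ℝ := 1 + (k : ℝ) ^ 2 with hq
  have hq0 : 0 < q := by positivity
  have e1 : q ^ s * q ^ (1 - s) = q := by rw [← Real.rpow_add hq0]; simp
  have e2 : (1 + |(k : ℝ)|) ^ 2 ≤ 2 * q := by
    have := sq_abs (k : ℝ); nlinarith [sq_nonneg (1 - |(k:ℝ)|)]
  have hx : 0 ≤ x := norm_nonneg _
  set a := q ^ s
  set b := q ^ (1 - s)
  have ha : 0 < a := by positivity
  have hb : 0 < b := by positivity
  have h3 : ((1 + |(k : ℝ)|) * x) ^ 2 ≤ (a * x ^ 2 + b) ^ 2 := by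
    have : ((1 + |(k : ℝ)|) * x) ^ 2 ≤ 2 * (a * b) * x ^ 2 := by
      rw [mul_pow, e1]; gcongr
    nlinarith [sq_nonneg (a * x ^ 2), sq_nonneg b]
  exact le_of_sq_le_sq h3 (by positivity)

lemma hasDerivAt_component {γ : ℝ → Rn n} {v : Rn n} {u : ℝ} (h : HasDerivAt γ v u) (j : Fin n) :
    HasDerivAt (fun u => γ u j) (v j) u :=
  (EuclideanSpace.proj j : Rn n →L[ℝ] ℝ).hasFDerivAt.comp_hasDerivAt u h

/-- Arc-length curves of class `H^{s,2}`, `s > 3/2`, are continuously differentiable. -/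
lemma MemHF.hasDerivAt_continuous {s : ℝ} (hs : 3 / 2 < s) {γ : ℝ → Rn n} (hγ : MemHF s γ)
    (harc : ArcLengthParam γ) :
    (∀ u, HasDerivAt γ (deriv γ u) u) ∧ Continuous (deriv γ) := by
  have hd : ∀ u, HasDerivAt γ (deriv γ u) u := fun u => by
    refine (differentiableAt_of_deriv_ne_zero fun h => ?_).hasDerivAt
    simpa [h] using harc u
  refine ⟨hd, ?_⟩
  refine (PiLp.continuous_toLp 2 (fun _ : Fin n => ℝ)).comp
    (f := fun u j => deriv γ u j) (continuous_pi fun j => ?_)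
  have hc : Continuous fun u => γ u j :=
    (EuclideanSpace.proj (𝕜 := ℝ) j).continuous.comp hγ.2.1
  obtain ⟨g, hg, hgd⟩ := exists_continuous_deriv_of_summable_fc hc
    (fun u => by simp only [hγ.1 u]) (hγ.summable_mul_norm_fCoef hs j)
  have : (fun u => deriv γ u j) = g := by
    ext u
    exact (hasDerivAt_component (hd u) j).unique (hgd u)
  rw [this]; exact hg

lemma norm_chord_le {γ γ' : ℝ → Rn n} (hd : ∀ u, HasDerivAt γ (γ' u) u)
    {H : ℝ} (h1 : ∀ u, ‖γ' u‖ ≤ H) (u w : ℝ) : ‖γ (u + w) - γ u‖ ≤ H * |w| := by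
  have := Convex.norm_image_sub_le_of_norm_hasDerivWithin_le (f := γ) (f' := γ') (s := univ)
    (C := H) (fun x _ => (hd x).hasDerivWithinAt) (fun x _ => h1 x) convex_univ
    (mem_univ u) (mem_univ (u + w))
  simpa using this

lemma chordDefect_nonneg {γ γ' : ℝ → Rn n} (hd : ∀ u, HasDerivAt γ (γ' u) u)
    (h1 : ∀ u, ‖γ' u‖ = 1) (u w : ℝ) : 0 ≤ w ^ 2 - ‖γ (u + w) - γ u‖ ^ 2 := by
  have h := norm_chord_le hd (fun u => (h1 u).le) u w
  rw [one_mul] at h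
  have := pow_le_pow_left₀ (norm_nonneg _) h 2
  rw [sq_abs] at this
  linarith

/-- The product measure on one period times the window of increments. -/
def stripMeasure : Measure (ℝ × ℝ) :=
  (volume.restrict (Ioc (0:ℝ) 1)).prod (volume.restrict (Ioo (-(1:ℝ)/2) (1/2)))

instance : IsFiniteMeasure stripMeasure := by unfold stripMeasure; infer_instance

lemma integral_chordDefect {γ γ' : ℝ → Rn n} (hd : ∀ u, HasDerivAt γ (γ' u) u)
    (hc : Continuous γ') (hP : Function.Periodic γ 1) (h1 : ∀ u, ‖γ' u‖ = 1) (w : ℝ) :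
    HasSum (fun k : ℤ => (∑ j, ‖fCoef γ k j‖ ^ 2) * cosDefect (2 * Real.pi * k * w))
      (∫ u in (0:ℝ)..1, (w ^ 2 - ‖γ (u + w) - γ u‖ ^ 2)) := by
  have hγc : Continuous γ := continuous_iff_continuousAt.2 fun u => (hd u).continuousAt
  have key : ∀ j : Fin n, _ := fun j => hasSum_deviation (f := fun u => γ u j)
    (g := fun u => γ' u j) (fun u => hasDerivAt_component (hd u) j)
    ((EuclideanSpace.proj (𝕜 := ℝ) j).continuous.comp hc) (fun u => by simp only [hP u]) w
  have := hasSum_sum (s := Finset.univ) fun j _ => key j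
  convert this using 1
  · ext k
    rw [Finset.sum_mul]
    rfl
  · rw [← intervalIntegral.integral_finsetSum]
    · congr 1
      ext u
      rw [Finset.sum_sub_distrib, ← Finset.mul_sum]
      have e1 := EuclideanSpace.norm_sq_eq (γ' u)
      have e2 := EuclideanSpace.norm_sq_eq (γ (u + w) - γ u)
      simp only [Real.norm_eq_abs, sq_abs, h1, PiLp.sub_apply] at e1 e2
      rw [← e1, ← e2]; ring
    · intro j _
      have h1 : Continuous fun u => γ' u j := (EuclideanSpace.proj (𝕜 := ℝ) j).continuous.comp hc
      have h2 : Continuous fun u => γ u j := (EuclideanSpace.proj (𝕜 := ℝ) j).continuous.comp hγc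
      exact Continuous.intervalIntegrable (by fun_prop) _ _

/-- The normalized chord defect of an `H^{(α+1)/2,2}` arc-length curve is integrable. -/
lemma integrable_chordDefect {α : ℝ} (hα : α ∈ Ioo (2:ℝ) 3) {γ γ' : ℝ → Rn n}
    (hγ : MemHF ((α + 1) / 2) γ) (hd : ∀ u, HasDerivAt γ (γ' u) u)
    (hc : Continuous γ') (h1 : ∀ u, ‖γ' u‖ = 1) :
    Integrable (fun p : ℝ × ℝ => |p.2| ^ (-(α + 2)) * (p.2 ^ 2 - ‖γ (p.1 + p.2) - γ p.1‖ ^ 2))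
      stripMeasure := by
  have hγc : Continuous γ := hγ.2.1
  have hm : Measurable (fun p : ℝ × ℝ =>
      |p.2| ^ (-(α + 2)) * (p.2 ^ 2 - ‖γ (p.1 + p.2) - γ p.1‖ ^ 2)) := by
    have : Measurable γ := hγc.measurable
    fun_prop
  have hnn : ∀ p : ℝ × ℝ, 0 ≤ |p.2| ^ (-(α + 2)) * (p.2 ^ 2 - ‖γ (p.1 + p.2) - γ p.1‖ ^ 2) :=
    fun p => mul_nonneg (by positivity) (chordDefect_nonneg hd h1 _ _)
  refine ⟨hm.aestronglyMeasurable, ?_⟩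
  rw [hasFiniteIntegral_iff_ofReal (Eventually.of_forall hnn), stripMeasure,
    lintegral_prod_symm _ (by fun_prop)]
  set S : ℤ → ℝ := fun k => ∑ j, ‖fCoef γ k j‖ ^ 2 with hS
  have hS0 : ∀ k, 0 ≤ S k := fun k => Finset.sum_nonneg fun _ _ => sq_nonneg _
  have inner : ∀ w : ℝ, ∫⁻ u in Ioc (0:ℝ) 1,
      ENNReal.ofReal (|w| ^ (-(α + 2)) * (w ^ 2 - ‖γ (u + w) - γ u‖ ^ 2)) =
      ∑' k : ℤ, ENNReal.ofReal
        (S k * (|w| ^ (-(α + 2)) * cosDefect (2 * Real.pi * k * w))) := by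
    intro w
    have hi : Integrable (fun u => |w| ^ (-(α + 2)) * (w ^ 2 - ‖γ (u + w) - γ u‖ ^ 2))
        (volume.restrict (Ioc (0:ℝ) 1)) := by
      have : Continuous (fun u => |w| ^ (-(α + 2)) * (w ^ 2 - ‖γ (u + w) - γ u‖ ^ 2)) := by
        fun_prop
      exact (this.intervalIntegrable 0 1).1
    rw [← ofReal_integral_eq_lintegral_ofReal hi (Eventually.of_forall fun u => hnn (u, w)),
      ← intervalIntegral.integral_of_le zero_le_one, intervalIntegral.integral_const_mul]
    have hs := (integral_chordDefect hd hc hγ.1 h1 w).mul_left (|w| ^ (-(α + 2)))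
    rw [← hs.tsum_eq, ENNReal.ofReal_tsum_of_nonneg _ hs.summable]
    · congr 1; ext k; congr 1; ring
    · exact fun k => mul_nonneg (by positivity) (mul_nonneg (hS0 k) (cosDefect_nonneg _))
  simp only [inner]
  rw [lintegral_tsum]
  swap
  · intro k
    have : Measurable cosDefect := continuous_cosDefect.measurable
    fun_prop
  have hk : ∀ k : ℤ, ∫⁻ w in Ioo (-(1:ℝ)/2) (1/2), ENNReal.ofReal
        (S k * (|w| ^ (-(α + 2)) * cosDefect (2 * Real.pi * k * w))) =
        ENNReal.ofReal (S k * multiplier α k) := by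
    intro k
    rw [multiplier, ← integral_const_mul, ofReal_integral_eq_lintegral_ofReal]
    · exact ((integrable_scaled_kernelDefect hα k).const_mul _).integrableOn
    · exact Eventually.of_forall fun w =>
        mul_nonneg (hS0 k) (mul_nonneg (by positivity) (cosDefect_nonneg _))
  simp only [hk]
  refine lt_top_iff_ne_top.2 (Summable.tsum_ofReal_ne_top ?_)
  obtain ⟨C, hC0, hC⟩ := exists_multiplier_le hα
  refine Summable.of_nonneg_of_le (fun k => mul_nonneg (hS0 k) (multiplier_nonneg _ _))
    (fun k => ?_) (hγ.2.2.mul_left C)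
  calc S k * multiplier α k ≤ S k * (C * |(k:ℝ)| ^ (α + 1)) := by
        gcongr
        · exact hC _
    _ ≤ S k * (C * (1 + (k:ℝ) ^ 2) ^ ((α + 1) / 2)) := by
        gcongr
        · have := abs_rpow_two_mul_le k (q := (α + 1) / 2) (by linarith [hα.1])
          rwa [show 2 * ((α + 1) / 2) = α + 1 by ring] at this
    _ = _ := by ring

lemma integrableOn_abs_rpow {r : ℝ} (hr : -1 < r) :
    IntegrableOn (fun w : ℝ => |w| ^ r) (Ioo (-(1:ℝ)/2) (1/2)) := by
  have h := integrable_comp_abs (f := fun x => (Ioc (0:ℝ) 1).indicator (fun x => x ^ r) x) (by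
    have : IntegrableOn (fun x : ℝ => x ^ r) (Ioc (0:ℝ) 1) :=
      (intervalIntegral.intervalIntegrable_rpow' hr (a := 0) (b := 1)).1
    exact ((integrable_indicator_iff measurableSet_Ioc).2 this).integrableOn)
  refine (h.integrableOn (s := Ioo (-(1:ℝ)/2) (1/2))).congr ?_
  filter_upwards [ae_restrict_mem measurableSet_Ioo,
    ae_restrict_of_ae (Measure.ae_ne volume (0:ℝ))] with w hw h0
  rw [indicator_of_mem]
  exact ⟨abs_pos.2 h0, abs_le.2 ⟨by linarith [hw.1], by linarith [hw.2]⟩⟩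

lemma integrable_strip_abs_rpow {r : ℝ} (hr : -1 < r) :
    Integrable (fun p : ℝ × ℝ => |p.2| ^ r) stripMeasure :=
  (integrableOn_abs_rpow hr).comp_snd _

lemma smul_integral_deriv {γ γ' : ℝ → Rn n} (hd : ∀ u, HasDerivAt γ (γ' u) u)
    (hc : Continuous γ') (u w : ℝ) :
    w • ∫ s in (0:ℝ)..1, γ' (u + s * w) = γ (u + w) - γ u := by
  rw [← intervalIntegral.integral_smul]
  have := intervalIntegral.integral_eq_sub_of_hasDerivAt (a := 0) (b := 1)
    (f := fun s : ℝ => γ (u + s * w)) (f' := fun s => w • γ' (u + s * w))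
    (fun s _ => (hd (u + s * w)).scomp s
      (by simpa using ((hasDerivAt_id s).mul_const w).const_add u))
    (Continuous.intervalIntegrable (by fun_prop) _ _)
  simpa using this

/-- Injective periodic `C¹` arc-length curves are bi-Lipschitz. -/
lemma exists_biLipschitz {γ γ' : ℝ → Rn n} (hd : ∀ u, HasDerivAt γ (γ' u) u)
    (hc : Continuous γ') (hP : Function.Periodic γ 1) (h1 : ∀ u, ‖γ' u‖ = 1)
    (hinj : PerInjective γ) :
    ∃ c, 0 < c ∧ c ≤ 1 ∧ ∀ u w, |w| ≤ 1 / 2 → c * |w| ≤ ‖γ (u + w) - γ u‖ := by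
  set F : ℝ × ℝ → ℝ := fun p => ‖∫ s in (0:ℝ)..1, γ' (p.1 + s * p.2)‖ with hF
  have hFc : Continuous F := by
    refine Continuous.norm ?_
    exact intervalIntegral.continuous_parametric_intervalIntegral_of_continuous'
      (by fun_prop) 0 1
  have hFw : ∀ u w, |w| * F (u, w) = ‖γ (u + w) - γ u‖ := fun u w => by
    rw [← smul_integral_deriv hd hc, norm_smul, Real.norm_eq_abs]
  obtain ⟨p, hp, hmin⟩ := (isCompact_Icc (a := (0:ℝ)) (b := 1)).prod
    (isCompact_Icc (a := -(1/2:ℝ)) (b := 1/2)) |>.exists_isMinOn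
    ⟨(0, 0), by norm_num, by norm_num⟩ hFc.continuousOn
  have hpos : 0 < F p := by
    refine lt_of_le_of_ne (norm_nonneg _) fun h => ?_
    rcases eq_or_ne p.2 0 with h0 | h0
    · simp [hF, h0, h1] at h
    · have h2 := hFw p.1 p.2
      rw [Prod.mk.eta, ← h, mul_zero] at h2
      obtain ⟨k, hk⟩ := hinj _ _ (sub_eq_zero.1 (norm_eq_zero.1 h2.symm))
      have hk' : p.2 = ((-k : ℤ) : ℝ) := by push_cast; linarith
      obtain ⟨hl, hr⟩ := hp.2
      rw [hk'] at hl hr h0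
      have a1 : (-1 : ℝ) < ((-k : ℤ) : ℝ) := by linarith
      have a2 : ((-k : ℤ) : ℝ) < 1 := by linarith
      have a3 : -1 < -k := by exact_mod_cast a1
      have a4 : -k < 1 := by exact_mod_cast a2
      exact h0 (by rw [show -k = 0 by omega]; simp)
  refine ⟨min (F p) 1, lt_min hpos one_pos, min_le_right _ _, fun u w hw => ?_⟩
  have hper : ‖γ (u + w) - γ u‖ = ‖γ (Int.fract u + w) - γ (Int.fract u)‖ := by
    have e : ∀ x, γ x = γ (x - ⌊u⌋) := fun x => by
      have := hP.sub_int_mul_eq ⌊u⌋ (x := x); simpa using this.symm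
    rw [e u, e (u + w), Int.fract, show u + w - ⌊u⌋ = u - ⌊u⌋ + w by ring]
  rw [hper, ← hFw, mul_comm]
  gcongr
  exact (min_le_left _ _).trans (hmin (show (Int.fract u, w) ∈ _ from
    ⟨⟨Int.fract_nonneg u, (Int.fract_lt_one u).le⟩, abs_le.1 hw⟩))

lemma abs_rpow_neg_sub_le {q m s t : ℝ} (hq : 0 ≤ q) (hm : 0 < m) (hs : m ≤ s) (ht : m ≤ t) :
    |s ^ (-q) - t ^ (-q)| ≤ q * m ^ (-q - 1) * |s - t| := by
  refine Convex.norm_image_sub_le_of_norm_hasDerivWithin_le (f := fun x : ℝ => x ^ (-q))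
    (f' := fun x => -q * x ^ (-q - 1)) (s := Ici m) (fun x hx => ?_) (fun x hx => ?_)
    (convex_Ici m) ht hs
  · exact (Real.hasDerivAt_rpow_const (Or.inl (hm.trans_le hx).ne')).hasDerivWithinAt
  · rw [Real.norm_eq_abs, abs_mul, abs_neg, abs_of_nonneg hq,
      abs_of_nonneg (Real.rpow_nonneg (hm.le.trans hx) _)]
    exact mul_le_mul_of_nonneg_left (Real.rpow_le_rpow_of_nonpos hm hx (by linarith)) hq

/-- Second order expansion of the difference of two negative powers around a reference
difference. -/
lemma abs_rpow_neg_expansion_le {p m x x₀ y : ℝ} (hp : 0 ≤ p) (hm : 0 < m) (hx : m ≤ x)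
    (hx₀ : m ≤ x₀) (hx₁ : x₀ ≤ 1) (hy : m ≤ y) :
    |x ^ (-p) - y ^ (-p) - (x₀ ^ (-p) - 1) - p * ((y - 1) - (x - x₀))| ≤
      p * ((p + 1) * m ^ (-(p + 1) - 1)) *
        ((1 - x₀) * |x - x₀| + |(y - 1) - (x - x₀)| * (|x - x₀| + |y - 1|)) := by
  set ξ := x - x₀ with hξ
  set B := (p + 1) * m ^ (-(p + 1) - 1) with hB
  have hB0 : 0 ≤ B := by positivity
  have hm1 : m ≤ 1 := hx₀.trans hx₁
  have hd : ∀ s : ℝ, m ≤ s → HasDerivAt (fun s : ℝ => s ^ (-p)) (-p * s ^ (-(p + 1))) s :=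
    fun s hs => by
      have := Real.hasDerivAt_rpow_const (x := s) (p := -p) (Or.inl (hm.trans_le hs).ne')
      rwa [show -p - 1 = -(p + 1) by ring] at this
  have h1 : |(x ^ (-p) - x₀ ^ (-p)) - ((1 + ξ) ^ (-p) - 1)| ≤ p * B * |ξ| * (1 - x₀) := by
    have := Convex.norm_image_sub_le_of_norm_hasDerivWithin_le
      (f := fun s : ℝ => (s + ξ) ^ (-p) - s ^ (-p))
      (f' := fun s => -p * (s + ξ) ^ (-(p + 1)) - -p * s ^ (-(p + 1))) (s := Icc x₀ 1)
      (C := p * B * |ξ|) (x := 1) (y := x₀) (fun s hs => ?_) (fun s hs => ?_) (convex_Icc _ _)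
      ⟨hx₁, le_rfl⟩ ⟨le_rfl, hx₁⟩
    · rw [Real.norm_eq_abs, Real.norm_eq_abs, abs_sub_comm x₀, abs_of_nonneg (sub_nonneg.2 hx₁)]
        at this
      rwa [show x₀ + ξ = x by rw [hξ]; ring, Real.one_rpow] at this
    · have hs1 : m ≤ s + ξ := by rw [hξ]; linarith [hs.1]
      exact (((hd _ hs1).comp_add_const s ξ).sub (hd s (hx₀.trans hs.1))).hasDerivWithinAt
    · have hs1 : m ≤ s + ξ := by rw [hξ]; linarith [hs.1]
      rw [← mul_sub, Real.norm_eq_abs, abs_mul, abs_neg, abs_of_nonneg hp, mul_assoc]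
      gcongr
      have := abs_rpow_neg_sub_le (q := p + 1) (by linarith) hm hs1 (hx₀.trans hs.1)
      simpa [hB] using this
  have h2 : |((1 + ξ) ^ (-p) + p * (1 + ξ)) - (y ^ (-p) + p * y)| ≤
      p * (B * (|ξ| + |y - 1|)) * |(1 + ξ) - y| := by
    have h1ξ : m ≤ 1 + ξ := by rw [hξ]; linarith
    refine Convex.norm_image_sub_le_of_norm_hasDerivWithin_le
      (f := fun s : ℝ => s ^ (-p) + p * s)
      (f' := fun s => -p * s ^ (-(p + 1)) + p * 1) (s := uIcc y (1 + ξ))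
      (C := p * (B * (|ξ| + |y - 1|))) (fun s hs => ?_) (fun s hs => ?_) (convex_uIcc _ _)
      left_mem_uIcc right_mem_uIcc
    · have hs1 : m ≤ s := (le_inf hy h1ξ).trans hs.1
      exact ((hd s hs1).add ((hasDerivAt_id s).const_mul p)).hasDerivWithinAt
    · have hs1 : m ≤ s := (le_inf hy h1ξ).trans hs.1
      rw [show -p * s ^ (-(p + 1)) + p * 1 = p * (1 ^ (-(p + 1)) - s ^ (-(p + 1))) by
        rw [Real.one_rpow]; ring, Real.norm_eq_abs, abs_mul, abs_of_nonneg hp]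
      gcongr
      refine (abs_rpow_neg_sub_le (q := p + 1) (by linarith) hm hm1 hs1).trans ?_
      refine mul_le_mul_of_nonneg_left ?_ hB0
      rw [abs_sub_comm]
      have := abs_nonneg ξ; have := abs_nonneg (y - 1)
      have := le_abs_self ξ; have := le_abs_self (y - 1)
      have := neg_abs_le ξ; have := neg_abs_le (y - 1)
      rcases le_total y (1 + ξ) with h | h
      · rw [uIcc_of_le h] at hs
        exact abs_le.2 ⟨by linarith [hs.1], by linarith [hs.2]⟩
      · rw [uIcc_of_ge h] at hs
        exact abs_le.2 ⟨by linarith [hs.1], by linarith [hs.2]⟩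
  have e : x ^ (-p) - y ^ (-p) - (x₀ ^ (-p) - 1) - p * ((y - 1) - ξ) =
      ((x ^ (-p) - x₀ ^ (-p)) - ((1 + ξ) ^ (-p) - 1)) +
      (((1 + ξ) ^ (-p) + p * (1 + ξ)) - (y ^ (-p) + p * y)) := by ring
  rw [e]
  refine (abs_add_le _ _).trans ((add_le_add h1 h2).trans (le_of_eq ?_))
  rw [show 1 + ξ - y = -((y - 1) - ξ) by ring, abs_neg]
  ring

section Average

variable {E : Type*} [NormedAddCommGroup E] [InnerProductSpace ℝ E] [CompleteSpace E]

lemma integral_inner_left {T : ℝ → E} (hT : Continuous T) (e : E) :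
    ∫ s in (0:ℝ)..1, ⟪T s, e⟫ = ⟪∫ s in (0:ℝ)..1, T s, e⟫ := by
  have := (innerSL ℝ e).intervalIntegral_comp_comm (hT.intervalIntegrable (μ := volume) 0 1)
  simp only [innerSL_apply_apply] at this
  simp only [real_inner_comm e]
  exact this

lemma integral_inner_sub_sub {T η : ℝ → E} (hT : Continuous T) (hη : Continuous η) (e : E) :
    (∫ s in (0:ℝ)..1, ⟪T s, η s⟫) - ⟪∫ s in (0:ℝ)..1, T s, ∫ s in (0:ℝ)..1, η s⟫ =
      ∫ s in (0:ℝ)..1, ⟪T s - ∫ s in (0:ℝ)..1, T s, η s - e⟫ := by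
  set t := ∫ s in (0:ℝ)..1, T s
  have h0 : ∀ s, ⟪T s - t, η s - e⟫ = ⟪T s, η s⟫ - ⟪T s, e⟫ - ⟪η s, t⟫ + ⟪t, e⟫ := fun s => by
    rw [inner_sub_left, inner_sub_right, inner_sub_right, real_inner_comm (η s) t]; ring
  simp only [h0]
  rw [intervalIntegral.integral_add (Continuous.intervalIntegrable (by fun_prop) _ _)
      (Continuous.intervalIntegrable (by fun_prop) _ _),
    intervalIntegral.integral_sub (Continuous.intervalIntegrable (by fun_prop) _ _)
      (Continuous.intervalIntegrable (by fun_prop) _ _),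
    intervalIntegral.integral_sub (Continuous.intervalIntegrable (by fun_prop) _ _)
      (Continuous.intervalIntegrable (by fun_prop) _ _),
    integral_inner_left hT, integral_inner_left hη, intervalIntegral.integral_const,
    real_inner_comm t (∫ s in (0:ℝ)..1, η s)]
  change _ = _ - ⟪t, e⟫ - _ + _
  simp only [sub_zero, one_smul]
  ring

lemma integral_norm_sub_sq {η : ℝ → E} (hη : Continuous η) (e : E) :
    ∫ s in (0:ℝ)..1, ‖η s - e‖ ^ 2 =
      ((∫ s in (0:ℝ)..1, ‖η s‖ ^ 2) - ‖∫ s in (0:ℝ)..1, η s‖ ^ 2) +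
        ‖(∫ s in (0:ℝ)..1, η s) - e‖ ^ 2 := by
  have h0 : ∀ s, ‖η s - e‖ ^ 2 = ‖η s‖ ^ 2 - 2 * ⟪η s, e⟫ + ‖e‖ ^ 2 := fun s =>
    norm_sub_sq_real _ _
  simp only [h0]
  rw [intervalIntegral.integral_add (Continuous.intervalIntegrable (by fun_prop) _ _)
      (Continuous.intervalIntegrable (by fun_prop) _ _),
    intervalIntegral.integral_sub (Continuous.intervalIntegrable (by fun_prop) _ _)
      (Continuous.intervalIntegrable (by fun_prop) _ _),
    intervalIntegral.integral_const_mul, integral_inner_left hη,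
    intervalIntegral.integral_const, norm_sub_sq_real]
  simp
  ring

end Average

lemma mean_norm_bounds {ρ : ℝ → ℝ} (hρ : Continuous ρ) {t : ℝ}
    (h : ∀ s, 1 - t ≤ ρ s ∧ ρ s ≤ 1 + t) :
    1 - t ≤ ∫ s in (0:ℝ)..1, ρ s ∧ ∫ s in (0:ℝ)..1, ρ s ≤ 1 + t := by
  constructor
  · have := intervalIntegral.integral_mono_on zero_le_one
      (intervalIntegrable_const (c := 1 - t) (μ := volume)) (hρ.intervalIntegrable 0 1) fun s _ => (h s).1
    simpa using this
  · have := intervalIntegral.integral_mono_on zero_le_one (hρ.intervalIntegrable 0 1)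
      (intervalIntegrable_const (c := 1 + t) (μ := volume)) fun s _ => (h s).2
    simpa using this

section AverageExpansion

variable {E : Type*} [NormedAddCommGroup E] [InnerProductSpace ℝ E]

lemma norm_integral_unit_le {f : ℝ → E} {H : ℝ} (h : ∀ s, ‖f s‖ ≤ H) :
    ‖∫ s in (0:ℝ)..1, f s‖ ≤ H := by
  simpa using intervalIntegral.norm_integral_le_of_norm_le_const (a := (0:ℝ)) (b := 1)
    fun s _ => h s

lemma norm_add_smul_bounds {v e : E} {τ H : ℝ} (hv : ‖v‖ = 1) (he : ‖e‖ ≤ H) :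
    1 - |τ| * H ≤ ‖v + τ • e‖ ∧ ‖v + τ • e‖ ≤ 1 + |τ| * H := by
  have h : ‖τ • e‖ ≤ |τ| * H := by
    rw [norm_smul, Real.norm_eq_abs]; gcongr
  have h1 := norm_add_le v (τ • e)
  have h2 := norm_sub_le (v + τ • e) (τ • e)
  rw [add_sub_cancel_right] at h2
  constructor <;> linarith

lemma sq_norm_sub_le {v t e e₀ : E} {τ H δ : ℝ} (hv : ‖v‖ = 1) (ht : ‖t‖ ≤ 1)
    (he : ‖e‖ ≤ H) (he₀ : ‖e₀‖ ≤ H) (hδ : ‖e - e₀‖ ≤ δ) (hτ : |τ| * H ≤ 1 / 4) :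
    (‖v + τ • e‖ - √(1 + 2 * τ * ⟪t, e₀⟫ + τ ^ 2 * ‖e₀‖ ^ 2)) ^ 2 ≤
      τ ^ 2 * (16 * H ^ 2 * ‖v - t‖ ^ 2 + 25 * δ ^ 2) := by
  have hH : 0 ≤ H := (norm_nonneg _).trans he
  have hδ0 : 0 ≤ δ := (norm_nonneg _).trans hδ
  have hcs : |⟪t, e₀⟫| ≤ H := (abs_real_inner_le_norm _ _).trans (by
    nlinarith [norm_nonneg t, norm_nonneg e₀])
  have hτi : |τ * ⟪t, e₀⟫| ≤ 1 / 4 := by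
    rw [abs_mul]; exact (mul_le_mul_of_nonneg_left hcs (abs_nonneg _)).trans hτ
  have hc : 0 ≤ 1 + 2 * τ * ⟪t, e₀⟫ + τ ^ 2 * ‖e₀‖ ^ 2 := by
    have := (abs_le.1 hτi).1
    nlinarith [sq_nonneg (τ * ‖e₀‖)]
  set c := √(1 + 2 * τ * ⟪t, e₀⟫ + τ ^ 2 * ‖e₀‖ ^ 2) with hcdef
  have hc0 : 0 ≤ c := Real.sqrt_nonneg _
  have hc2 : c ^ 2 = 1 + 2 * τ * ⟪t, e₀⟫ + τ ^ 2 * ‖e₀‖ ^ 2 := Real.sq_sqrt hc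
  set r := ‖v + τ • e‖ with hr
  have hr1 : 3 / 4 ≤ r := by
    have := (norm_add_smul_bounds (τ := τ) hv he).1; linarith
  have hr2 : r ^ 2 = 1 + 2 * τ * ⟪v, e⟫ + τ ^ 2 * ‖e‖ ^ 2 := by
    rw [hr, norm_add_sq_real, hv, inner_smul_right, norm_smul, mul_pow, Real.norm_eq_abs, sq_abs]
    ring
  have hdiff : r ^ 2 - c ^ 2 = τ * (2 * ⟪v - t, e⟫ + 2 * ⟪t, e - e₀⟫ +
      τ * ((‖e‖ - ‖e₀‖) * (‖e‖ + ‖e₀‖))) := by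
    rw [hr2, hc2, inner_sub_left, inner_sub_right]; ring
  set d := ‖v - t‖ with hd
  have b1 : |⟪v - t, e⟫| ≤ H * d := by
    refine (abs_real_inner_le_norm _ _).trans ?_
    rw [mul_comm]; gcongr
  have b2 : |⟪t, e - e₀⟫| ≤ δ := by
    refine (abs_real_inner_le_norm _ _).trans ?_
    nlinarith [norm_nonneg t, norm_nonneg (e - e₀)]
  have b3 : |τ * ((‖e‖ - ‖e₀‖) * (‖e‖ + ‖e₀‖))| ≤ δ / 2 := by
    rw [abs_mul, abs_mul, abs_of_nonneg (by positivity : 0 ≤ ‖e‖ + ‖e₀‖)]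
    have h1 : |‖e‖ - ‖e₀‖| ≤ δ := (abs_norm_sub_norm_le _ _).trans hδ
    calc |τ| * (|‖e‖ - ‖e₀‖| * (‖e‖ + ‖e₀‖)) ≤ |τ| * (δ * (H + H)) := by gcongr
      _ = (|τ| * H) * (2 * δ) := by ring
      _ ≤ 1 / 4 * (2 * δ) := by gcongr
      _ = δ / 2 := by ring
  have b4 : |2 * ⟪v - t, e⟫ + 2 * ⟪t, e - e₀⟫ +
      τ * ((‖e‖ - ‖e₀‖) * (‖e‖ + ‖e₀‖))| ≤ 2 * H * d + 5 / 2 * δ := by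
    rw [abs_le] at *
    constructor <;> linarith [b1.1, b1.2, b2.1, b2.2, b3.1, b3.2]
  have b5 : (r ^ 2 - c ^ 2) ^ 2 ≤ τ ^ 2 * (8 * H ^ 2 * d ^ 2 + 25 / 2 * δ ^ 2) := by
    rw [hdiff, mul_pow]
    refine mul_le_mul_of_nonneg_left ?_ (sq_nonneg τ)
    refine (sq_le_sq' (abs_le.1 b4).1 (abs_le.1 b4).2).trans ?_
    nlinarith [sq_nonneg (2 * H * d - 5 / 2 * δ)]
  have b6 : (r - c) ^ 2 * (9 / 16) ≤ (r ^ 2 - c ^ 2) ^ 2 := by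
    have : (r ^ 2 - c ^ 2) ^ 2 = (r - c) ^ 2 * (r + c) ^ 2 := by ring
    rw [this]
    refine mul_le_mul_of_nonneg_left ?_ (sq_nonneg _)
    nlinarith
  have : 0 ≤ (r - c) ^ 2 := sq_nonneg _
  linarith

variable [CompleteSpace E]
lemma integral_norm_sub_mean_sq {T : ℝ → E} (hT : Continuous T) (h1 : ∀ s, ‖T s‖ = 1) :
    ∫ s in (0:ℝ)..1, ‖T s - ∫ s in (0:ℝ)..1, T s‖ ^ 2 = 1 - ‖∫ s in (0:ℝ)..1, T s‖ ^ 2 := by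
  rw [integral_norm_sub_sq hT]
  simp [h1]

lemma abs_mean_covariance_le {T η : ℝ → E} (hT : Continuous T) (hη : Continuous η)
    (h1 : ∀ s, ‖T s‖ = 1) {δ : ℝ} (hδ : ∀ s ∈ Icc (0:ℝ) 1, ‖η s - η 0‖ ≤ δ) :
    |(∫ s in (0:ℝ)..1, ⟪T s, η s⟫) - ⟪∫ s in (0:ℝ)..1, T s, ∫ s in (0:ℝ)..1, η s⟫| ≤
      ((1 - ‖∫ s in (0:ℝ)..1, T s‖ ^ 2) + δ ^ 2) / 2 := by
  rw [integral_inner_sub_sub hT hη (η 0)]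
  have hν := integral_norm_sub_mean_sq hT h1
  set t := ∫ s in (0:ℝ)..1, T s
  calc |∫ s in (0:ℝ)..1, ⟪T s - t, η s - η 0⟫|
      ≤ ∫ s in (0:ℝ)..1, |⟪T s - t, η s - η 0⟫| :=
        intervalIntegral.abs_integral_le_integral_abs zero_le_one
    _ ≤ ∫ s in (0:ℝ)..1, (‖T s - t‖ ^ 2 + δ ^ 2) / 2 := by
        refine intervalIntegral.integral_mono_on zero_le_one
          (Continuous.intervalIntegrable (by fun_prop) _ _)
          (Continuous.intervalIntegrable (by fun_prop) _ _) fun s hs => ?_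
        have h2 := abs_real_inner_le_norm (T s - t) (η s - η 0)
        have h3 : ‖T s - t‖ * ‖η s - η 0‖ ≤ ‖T s - t‖ * δ :=
          mul_le_mul_of_nonneg_left (hδ s hs) (norm_nonneg _)
        nlinarith [sq_nonneg (‖T s - t‖ - δ)]
    _ = ((1 - ‖t‖ ^ 2) + δ ^ 2) / 2 := by
        rw [intervalIntegral.integral_div, intervalIntegral.integral_add
          (Continuous.intervalIntegrable (by fun_prop) _ _)
          (Continuous.intervalIntegrable (by fun_prop) _ _), hν]
        simp

/-- The speed and chord perturbations agree to first order up to the covariance. -/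
lemma abs_mean_second_order_le {T η : ℝ → E} (hT : Continuous T) (hη : Continuous η)
    (h1 : ∀ s, ‖T s‖ = 1) {H δ τ : ℝ} (hH : ∀ s, ‖η s‖ ≤ H)
    (hδ : ∀ s ∈ Icc (0:ℝ) 1, ‖η s - η 0‖ ≤ δ) (hτ : |τ| * H ≤ 1 / 4) :
    |(((∫ s in (0:ℝ)..1, ‖T s + τ • η s‖) ^ 2 - 1) -
        (‖(∫ s in (0:ℝ)..1, T s) + τ • ∫ s in (0:ℝ)..1, η s‖ ^ 2 -
          ‖∫ s in (0:ℝ)..1, T s‖ ^ 2)) -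
      2 * τ * ((∫ s in (0:ℝ)..1, ⟪T s, η s⟫) -
        ⟪∫ s in (0:ℝ)..1, T s, ∫ s in (0:ℝ)..1, η s⟫)| ≤
      τ ^ 2 * (16 * H ^ 2 * (1 - ‖∫ s in (0:ℝ)..1, T s‖ ^ 2) + 26 * δ ^ 2) := by
  have hν := integral_norm_sub_mean_sq hT h1
  have ht1 : ‖∫ s in (0:ℝ)..1, T s‖ ≤ 1 := norm_integral_unit_le fun s => (h1 s).le
  set t := ∫ s in (0:ℝ)..1, T s
  have hη2 := integral_norm_sub_sq hη (η 0)
  have hη3 := integral_norm_sub_sq hη (∫ s in (0:ℝ)..1, η s)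
  set e := ∫ s in (0:ℝ)..1, η s
  set ρ : ℝ → ℝ := fun s => ‖T s + τ • η s‖ with hρ
  have hρc : Continuous ρ := by fun_prop
  set c := √(1 + 2 * τ * ⟪t, η 0⟫ + τ ^ 2 * ‖η 0‖ ^ 2)
  have hV := integral_norm_sub_sq (E := ℝ) hρc c
  have hV0 := integral_norm_sub_sq (E := ℝ) hρc (∫ s in (0:ℝ)..1, ρ s)
  set R := ∫ s in (0:ℝ)..1, ρ s with hR
  have hρ2 : ∫ s in (0:ℝ)..1, ‖ρ s‖ ^ 2 = 1 + 2 * τ * (∫ s in (0:ℝ)..1, ⟪T s, η s⟫) +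
      τ ^ 2 * ∫ s in (0:ℝ)..1, ‖η s‖ ^ 2 := by
    have : ∀ s, ‖ρ s‖ ^ 2 = 1 + 2 * τ * ⟪T s, η s⟫ + τ ^ 2 * ‖η s‖ ^ 2 := fun s => by
      simp only [hρ, norm_norm]
      rw [norm_add_sq_real, h1, inner_smul_right, norm_smul, mul_pow, Real.norm_eq_abs, sq_abs]
      ring
    simp only [this]
    rw [intervalIntegral.integral_add (Continuous.intervalIntegrable (by fun_prop) _ _)
      (Continuous.intervalIntegrable (by fun_prop) _ _),
      intervalIntegral.integral_add (Continuous.intervalIntegrable (by fun_prop) _ _)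
      (Continuous.intervalIntegrable (by fun_prop) _ _),
      intervalIntegral.integral_const_mul, intervalIntegral.integral_const_mul]
    simp
  have hVle : ∫ s in (0:ℝ)..1, ‖ρ s - c‖ ^ 2 ≤
      τ ^ 2 * (16 * H ^ 2 * (1 - ‖t‖ ^ 2) + 25 * δ ^ 2) := by
    calc ∫ s in (0:ℝ)..1, ‖ρ s - c‖ ^ 2
        ≤ ∫ s in (0:ℝ)..1, τ ^ 2 * (16 * H ^ 2 * ‖T s - t‖ ^ 2 + 25 * δ ^ 2) := by
          refine intervalIntegral.integral_mono_on zero_le_one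
            (Continuous.intervalIntegrable (by fun_prop) _ _)
            (Continuous.intervalIntegrable (by fun_prop) _ _) fun s hs => ?_
          rw [Real.norm_eq_abs, sq_abs]
          exact sq_norm_sub_le (h1 s) ht1 (hH s) (hH 0) (hδ s hs) hτ
      _ = _ := by
          rw [intervalIntegral.integral_const_mul, intervalIntegral.integral_add
            (Continuous.intervalIntegrable (by fun_prop) _ _)
            (Continuous.intervalIntegrable (by fun_prop) _ _),
            intervalIntegral.integral_const_mul, hν]
          simp
  have hη4 : ∫ s in (0:ℝ)..1, ‖η s - η 0‖ ^ 2 ≤ δ ^ 2 := by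
    have := intervalIntegral.integral_mono_on (g := fun _ => δ ^ 2) (μ := volume) zero_le_one
      (Continuous.intervalIntegrable (show Continuous fun s => ‖η s - η 0‖ ^ 2 by fun_prop) _ _)
      intervalIntegrable_const
      fun s hs => pow_le_pow_left₀ (norm_nonneg _) (hδ s hs) 2
    simpa using this
  have hx : ‖t + τ • e‖ ^ 2 - ‖t‖ ^ 2 = 2 * τ * ⟪t, e⟫ + τ ^ 2 * ‖e‖ ^ 2 := by
    rw [norm_add_sq_real, inner_smul_right, norm_smul, mul_pow, Real.norm_eq_abs, sq_abs]
    ring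
  have p1 : 0 ≤ ∫ s in (0:ℝ)..1, ‖ρ s - R‖ ^ 2 :=
    intervalIntegral.integral_nonneg zero_le_one fun s _ => sq_nonneg _
  have p2 : 0 ≤ ∫ s in (0:ℝ)..1, ‖η s - e‖ ^ 2 :=
    intervalIntegral.integral_nonneg zero_le_one fun s _ => sq_nonneg _
  rw [sub_self, norm_zero, zero_pow two_ne_zero, add_zero] at hη3 hV0
  have q1 : 0 ≤ ‖R - c‖ ^ 2 := sq_nonneg _
  have q2 : 0 ≤ ‖e - η 0‖ ^ 2 := sq_nonneg _
  have q3 : ‖R‖ ^ 2 = R ^ 2 := by rw [Real.norm_eq_abs, sq_abs]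
  rw [hx]
  set D := (∫ s in (0:ℝ)..1, ‖η s‖ ^ 2) - ‖e‖ ^ 2 with hD
  set V := (∫ s in (0:ℝ)..1, ‖ρ s‖ ^ 2) - ‖R‖ ^ 2 with hVd
  have e1 : ((R ^ 2 - 1) - (2 * τ * ⟪t, e⟫ + τ ^ 2 * ‖e‖ ^ 2)) -
      2 * τ * ((∫ s in (0:ℝ)..1, ⟪T s, η s⟫) - ⟪t, e⟫) = τ ^ 2 * D - V := by
    rw [hVd, hρ2, q3, hD]; ring
  rw [e1]
  have r1 : 0 ≤ τ ^ 2 * D := mul_nonneg (sq_nonneg _) (by linarith)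
  have r2 : τ ^ 2 * D ≤ τ ^ 2 * δ ^ 2 := mul_le_mul_of_nonneg_left (by linarith) (sq_nonneg _)
  have r3 : 0 ≤ V := by linarith
  have r4 : V ≤ τ ^ 2 * (16 * H ^ 2 * (1 - ‖t‖ ^ 2) + 25 * δ ^ 2) := by linarith
  have r5 : 0 ≤ τ ^ 2 * (16 * H ^ 2 * (1 - ‖t‖ ^ 2)) := by
    have : 0 ≤ 1 - ‖t‖ ^ 2 := by nlinarith [norm_nonneg t]
    positivity
  have r6 : 0 ≤ τ ^ 2 * δ ^ 2 := by positivity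
  rw [abs_le]
  constructor <;> linarith

end AverageExpansion

lemma abs_sq_sub_one_le {R t : ℝ} (ht0 : 0 ≤ t) (ht : t ≤ 1 / 4) (h1 : 1 - t ≤ R)
    (h2 : R ≤ 1 + t) : |R ^ 2 - 1| ≤ 3 * t := by
  rw [abs_le]; constructor <;> nlinarith

lemma abs_norm_add_smul_sq_sub_le {v e : Rn n} {τ H : ℝ} (hv : ‖v‖ ≤ 1) (he : ‖e‖ ≤ H)
    (hτ : |τ| * H ≤ 1 / 4) : |‖v + τ • e‖ ^ 2 - ‖v‖ ^ 2| ≤ 3 * (|τ| * H) := by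
  have h : ‖τ • e‖ ≤ |τ| * H := by rw [norm_smul, Real.norm_eq_abs]; gcongr
  have h1 := norm_add_le v (τ • e)
  have h2 := norm_sub_le (v + τ • e) (τ • e)
  rw [add_sub_cancel_right] at h2
  have h3 := norm_nonneg (v + τ • e)
  have h4 := norm_nonneg v
  rw [abs_le]
  constructor <;> nlinarith [norm_nonneg (τ • e)]

/-- Expansion of the scaled energy density of a perturbed curve. -/
lemma exists_abs_mean_energy_le {p m : ℝ} (hp : 0 ≤ p) (hm : 0 < m) (hm4 : m ≤ 1 / 4) :
    ∃ C, 0 ≤ C ∧ ∀ H H₂ : ℝ, 0 ≤ H → ∃ K, 0 ≤ K ∧ ∀ (T η : ℝ → Rn n) (a τ : ℝ),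
      Continuous T → Continuous η → (∀ s, ‖T s‖ = 1) → (∀ s, ‖η s‖ ≤ H) →
      (∀ s ∈ Icc (0:ℝ) 1, ‖η s - η 0‖ ≤ H₂ * a) → |τ| * H ≤ 1 / 4 →
      m ≤ ‖∫ s in (0:ℝ)..1, T s‖ ^ 2 →
      m ≤ ‖(∫ s in (0:ℝ)..1, T s) + τ • ∫ s in (0:ℝ)..1, η s‖ ^ 2 →
      |(‖(∫ s in (0:ℝ)..1, T s) + τ • ∫ s in (0:ℝ)..1, η s‖ ^ 2) ^ (-p) -
          ((∫ s in (0:ℝ)..1, ‖T s + τ • η s‖) ^ 2) ^ (-p) -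
          ((‖∫ s in (0:ℝ)..1, T s‖ ^ 2) ^ (-p) - 1) -
          2 * p * τ * ((∫ s in (0:ℝ)..1, ⟪T s, η s⟫) -
            ⟪∫ s in (0:ℝ)..1, T s, ∫ s in (0:ℝ)..1, η s⟫)| ≤
        C * (|τ| * H) * (1 - ‖∫ s in (0:ℝ)..1, T s‖ ^ 2) +
          τ ^ 2 * K * ((1 - ‖∫ s in (0:ℝ)..1, T s‖ ^ 2) + a ^ 2) := by
  set C₀ := p * ((p + 1) * m ^ (-(p + 1) - 1)) with hC₀
  have hC₀0 : 0 ≤ C₀ := by positivity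
  refine ⟨C₀ * 3, by positivity, fun H H₂ hH0 => ⟨C₀ * (6 * H * (1 + H₂ ^ 2) +
    3 / 2 * (16 * H ^ 2 + 26 * H₂ ^ 2)) + p * (16 * H ^ 2 + 26 * H₂ ^ 2), by positivity,
    fun T η a τ hT hη h1 hH hδ hτ hx₀ hx => ?_⟩⟩
  have hβ := abs_mean_covariance_le hT hη h1 hδ
  have hz := abs_mean_second_order_le hT hη h1 hH hδ hτ
  have ht1 : ‖∫ s in (0:ℝ)..1, T s‖ ≤ 1 := norm_integral_unit_le fun s => (h1 s).le
  have he1 : ‖∫ s in (0:ℝ)..1, η s‖ ≤ H := norm_integral_unit_le hH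
  have hξ := abs_norm_add_smul_sq_sub_le ht1 he1 hτ
  obtain ⟨hR1, hR2⟩ := mean_norm_bounds (ρ := fun s => ‖T s + τ • η s‖) (by fun_prop)
    fun s => norm_add_smul_bounds (h1 s) (hH s)
  have ht0 : 0 ≤ |τ| * H := by positivity
  have hR3 := abs_sq_sub_one_le ht0 hτ hR1 hR2
  set β := (∫ s in (0:ℝ)..1, ⟪T s, η s⟫) - ⟪∫ s in (0:ℝ)..1, T s, ∫ s in (0:ℝ)..1, η s⟫
  set R := ∫ s in (0:ℝ)..1, ‖T s + τ • η s‖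
  set x := ‖(∫ s in (0:ℝ)..1, T s) + τ • ∫ s in (0:ℝ)..1, η s‖ ^ 2
  have hx₁ : ‖∫ s in (0:ℝ)..1, T s‖ ^ 2 ≤ 1 := pow_le_one₀ (norm_nonneg _) ht1
  set x₀ := ‖∫ s in (0:ℝ)..1, T s‖ ^ 2
  have hy : m ≤ R ^ 2 := by nlinarith
  have key := abs_rpow_neg_expansion_le hp hm hx hx₀ hx₁ hy
  rw [← hC₀] at key
  set ν := 1 - x₀ with hν
  have hν0 : 0 ≤ ν := by linarith
  set z := (R ^ 2 - 1) - (x - x₀)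
  set V := 16 * H ^ 2 * ν + 26 * (H₂ * a) ^ 2 with hV
  have hV0 : 0 ≤ V := by positivity
  have hz2 : |z| ≤ |τ| * (ν + (H₂ * a) ^ 2) + τ ^ 2 * V := by
    have : z = 2 * τ * β + (z - 2 * τ * β) := by ring
    rw [this]
    refine (abs_add_le _ _).trans (add_le_add ?_ hz)
    rw [abs_mul, abs_mul, abs_two]
    calc 2 * |τ| * |β| ≤ 2 * |τ| * ((ν + (H₂ * a) ^ 2) / 2) := by gcongr
      _ = _ := by ring
  set W := x ^ (-p) - (R ^ 2) ^ (-p) - (x₀ ^ (-p) - 1)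
  have step : |W - 2 * p * τ * β| ≤ C₀ * (ν * |x - x₀| + |z| * (|x - x₀| + |R ^ 2 - 1|)) +
      p * (τ ^ 2 * V) := by
    have : W - 2 * p * τ * β = (W - p * z) + p * (z - 2 * τ * β) := by ring
    rw [this]
    refine (abs_add_le _ _).trans (add_le_add key ?_)
    rw [abs_mul, abs_of_nonneg hp]
    gcongr
  refine step.trans ?_
  have hτ2 : |τ| * |τ| = τ ^ 2 := by rw [← sq, sq_abs]
  have s1 : |z| * (|x - x₀| + |R ^ 2 - 1|) ≤
      τ ^ 2 * (6 * H * (ν + (H₂ * a) ^ 2) + 3 / 2 * V) := by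
    calc |z| * (|x - x₀| + |R ^ 2 - 1|)
        ≤ (|τ| * (ν + (H₂ * a) ^ 2) + τ ^ 2 * V) * (3 * (|τ| * H) + 3 * (|τ| * H)) := by gcongr
      _ = (|τ| * |τ|) * (6 * H * (ν + (H₂ * a) ^ 2)) + (|τ| * H) * (6 * (τ ^ 2 * V)) := by ring
      _ ≤ (|τ| * |τ|) * (6 * H * (ν + (H₂ * a) ^ 2)) + 1 / 4 * (6 * (τ ^ 2 * V)) := by gcongr
      _ = _ := by rw [hτ2]; ring
  have s2 : ν + (H₂ * a) ^ 2 ≤ (1 + H₂ ^ 2) * (ν + a ^ 2) := by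
    nlinarith [mul_nonneg (sq_nonneg H₂) hν0, sq_nonneg a]
  have s3 : V ≤ (16 * H ^ 2 + 26 * H₂ ^ 2) * (ν + a ^ 2) := by
    rw [hV]
    nlinarith [mul_nonneg (sq_nonneg H₂) hν0, mul_nonneg (sq_nonneg H) (sq_nonneg a)]
  generalize |z| * (|x - x₀| + |R ^ 2 - 1|) = Q at s1 ⊢
  calc C₀ * (ν * |x - x₀| + Q) + p * (τ ^ 2 * V)
      ≤ C₀ * (ν * (3 * (|τ| * H)) + τ ^ 2 * (6 * H * ((1 + H₂ ^ 2) * (ν + a ^ 2)) +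
          3 / 2 * ((16 * H ^ 2 + 26 * H₂ ^ 2) * (ν + a ^ 2)))) +
          p * (τ ^ 2 * ((16 * H ^ 2 + 26 * H₂ ^ 2) * (ν + a ^ 2))) := by
        gcongr
        exact s1.trans (by gcongr)
    _ = _ := by ring

/-- Replacing the arc length by the intrinsic distance is a small smooth perturbation. -/
lemma exists_abs_intrinsic_sub_le {α : ℝ} (hα : 0 ≤ α) :
    ∃ C, 0 ≤ C ∧ ∀ a R ℓ t : ℝ, a ≤ 1 / 2 → 0 ≤ a → 0 ≤ t → t ≤ 1 / 4 →
      1 - t ≤ R → R ≤ 1 + t → 1 - t ≤ ℓ → ℓ ≤ 1 + t →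
      |(a * R) ^ (-α) - (min (a * R) (ℓ - a * R)) ^ (-α)| ≤ C * t := by
  refine ⟨α * (1 / 8) ^ (-α - 1) * 2, by positivity,
    fun a R ℓ t ha ha0 ht0 ht hR1 hR2 hℓ1 hℓ2 => ?_⟩
  rcases le_total (a * R) (ℓ - a * R) with h | h
  · rw [min_eq_left h]; simp; positivity
  · rw [min_eq_right h]
    have hA : a * R ≤ (1 + t) / 2 := by nlinarith
    refine (abs_rpow_neg_sub_le (m := 1 / 8) hα (by norm_num) (by linarith) (by linarith)).trans ?_
    rw [mul_assoc (α * (1 / 8) ^ (-α - 1))]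
    gcongr
    rw [abs_of_nonneg (by linarith)]
    linarith

lemma abs_energy_combination_le {α τ H H₂ a q M β P κ g ν C₁ C₂ C₃ K : ℝ} (hα : 0 ≤ α) (hα3 : α ≤ 3)
    (hq : 0 ≤ q) (hν : 0 ≤ ν) (hH : 0 ≤ H) (hC₁ : 0 ≤ C₁) (hC₂ : 0 ≤ C₂) (hC₃ : 0 ≤ C₃)
    (hK : 0 ≤ K) (hM : |M - α * τ * β| ≤ C₁ * (|τ| * H) * ν + τ ^ 2 * K * (ν + a ^ 2))
    (hβ : |β| ≤ (ν + (H₂ * a) ^ 2) / 2) (hP : |P - 1| ≤ 3 * (|τ| * H)) (hP2 : |P| ≤ 2)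
    (hg : |g| ≤ C₂ * ν) (hκ : |κ| ≤ C₃ * (|τ| * H)) :
    |(q * (g + M) + κ) * P - q * g - α * τ * (q * β)| ≤
      (2 * C₁ + 3 * C₂ + 2 * C₃) * (|τ| * H) * (1 + q * ν) +
        τ ^ 2 * (2 * K + 9 * H * (1 + H₂ ^ 2)) * (q * ν + q * a ^ 2) := by
  have e : (q * (g + M) + κ) * P - q * g - α * τ * (q * β) =
      q * (M - α * τ * β) * P + α * τ * (q * β) * (P - 1) + q * g * (P - 1) + κ * P := by ring
  have b1 : |q * (M - α * τ * β) * P| ≤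
      q * (C₁ * (|τ| * H) * ν + τ ^ 2 * K * (ν + a ^ 2)) * 2 := by
    rw [abs_mul, abs_mul, abs_of_nonneg hq]; gcongr
  have s2 : ν + (H₂ * a) ^ 2 ≤ (1 + H₂ ^ 2) * (ν + a ^ 2) := by
    nlinarith [mul_nonneg (sq_nonneg H₂) hν, sq_nonneg a]
  have b2 : |α * τ * (q * β) * (P - 1)| ≤
      3 * |τ| * (q * ((1 + H₂ ^ 2) * (ν + a ^ 2))) * (3 * (|τ| * H)) := by
    rw [abs_mul, abs_mul, abs_mul, abs_mul, abs_of_nonneg hq, abs_of_nonneg hα]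
    gcongr
    refine hβ.trans ?_
    have : 0 ≤ ν + (H₂ * a) ^ 2 := by positivity
    linarith
  have b3 : |q * g * (P - 1)| ≤ q * (C₂ * ν) * (3 * (|τ| * H)) := by
    rw [abs_mul, abs_mul, abs_of_nonneg hq]; gcongr
  have b4 : |κ * P| ≤ C₃ * (|τ| * H) * 2 := by rw [abs_mul]; gcongr
  have hτ2 : |τ| * |τ| = τ ^ 2 := by rw [← sq, sq_abs]
  rw [e]
  refine (abs_add_le _ _).trans ((add_le_add ((abs_add_le _ _).trans (add_le_add
    ((abs_add_le _ _).trans (add_le_add b1 b2)) b3)) b4).trans ?_)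
  have r1 : 0 ≤ C₃ * (|τ| * H) * (q * ν) := by positivity
  have r2 : 0 ≤ C₁ * (|τ| * H) := by positivity
  have r3 : 0 ≤ C₂ * (|τ| * H) := by positivity
  have r4 : 3 * |τ| * (q * ((1 + H₂ ^ 2) * (ν + a ^ 2))) * (3 * (|τ| * H)) =
      τ ^ 2 * (9 * H * (1 + H₂ ^ 2)) * (q * ν + q * a ^ 2) := by rw [← hτ2]; ring
  rw [r4]
  linarith

/-- The scaled defect of the squared chord length. -/
def chordExcess (α : ℝ) (γ : ℝ → Rn n) (u w : ℝ) : ℝ :=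
  |w| ^ (-(α + 2)) * (w ^ 2 - ‖γ (u + w) - γ u‖ ^ 2)

/-- The leading part of the density of the first variation. -/
def leadingVariation (α : ℝ) (γ h : ℝ → Rn n) (u w : ℝ) : ℝ :=
  |w| ^ (-(α + 2)) * (w ^ 2 * (∫ s in (0:ℝ)..1, ⟪deriv γ (u + s * w), deriv h (u + s * w)⟫) -
    ⟪γ (u + w) - γ u, h (u + w) - h u⟫)

lemma ContDiff.hasDerivAt_deriv {γ : ℝ → Rn n} (hγ : ContDiff ℝ 1 γ) (u : ℝ) :
    HasDerivAt γ (deriv γ u) u :=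
  ((hγ.differentiable one_ne_zero) u).hasDerivAt

lemma smul_mean_deriv {γ : ℝ → Rn n} (hγ : ContDiff ℝ 1 γ) (u w : ℝ) :
    w • ∫ s in (0:ℝ)..1, deriv γ (u + s * w) = γ (u + w) - γ u :=
  smul_integral_deriv hγ.hasDerivAt_deriv hγ.continuous_deriv_one u w

lemma norm_chord_eq {γ : ℝ → Rn n} (hγ : ContDiff ℝ 1 γ) (u w : ℝ) :
    ‖γ (u + w) - γ u‖ = |w| * ‖∫ s in (0:ℝ)..1, deriv γ (u + s * w)‖ := by
  rw [← smul_mean_deriv hγ, norm_smul, Real.norm_eq_abs]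

lemma arcLen_eq {γ : ℝ → Rn n} (u w : ℝ) :
    arcLen γ u w = |w| * ∫ s in (0:ℝ)..1, ‖deriv γ (u + s * w)‖ := by
  have h : w • ∫ s in (0:ℝ)..1, ‖deriv γ (u + w * s)‖ =
      ∫ θ in (u + w * 0)..(u + w * 1), ‖deriv γ θ‖ :=
    intervalIntegral.smul_integral_comp_add_mul (fun θ => ‖deriv γ θ‖) w u
  simp only [mul_zero, mul_one, add_zero] at h
  rw [arcLen, ← h, smul_eq_mul, abs_mul]
  simp only [mul_comm w]
  rw [abs_of_nonneg (intervalIntegral.integral_nonneg zero_le_one fun s _ => norm_nonneg _)]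

lemma mul_rpow_neg_eq {α a r : ℝ} (ha : 0 ≤ a) (hr : 0 ≤ r) :
    (a * r) ^ (-α) = a ^ (-α) * (r ^ 2) ^ (-(α / 2)) := by
  rw [Real.mul_rpow ha hr, ← Real.rpow_natCast_mul hr]
  congr 2
  push_cast
  ring

lemma ohIntegrand_eq {α : ℝ} {γ : ℝ → Rn n} (hγ : ContDiff ℝ 1 γ) {u w : ℝ}
    (hD : 0 ≤ idist γ u w) :
    ohIntegrand α γ u w = (|w| ^ (-α) * (‖∫ s in (0:ℝ)..1, deriv γ (u + s * w)‖ ^ 2) ^ (-(α / 2)) -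
      idist γ u w ^ (-α)) * (‖deriv γ (u + w)‖ * ‖deriv γ u‖) := by
  rw [ohIntegrand, ← mul_rpow_neg_eq (abs_nonneg w) (norm_nonneg _), ← norm_chord_eq hγ,
    Real.rpow_neg (norm_nonneg _), Real.rpow_neg hD, one_div, one_div]
  ring

lemma rpow_neg_add_two_mul_sq (α : ℝ) {w : ℝ} (hw : w ≠ 0) :
    |w| ^ (-(α + 2)) * w ^ 2 = |w| ^ (-α) := by
  have : w ^ 2 = |w| ^ (2:ℝ) := by rw [Real.rpow_two, sq_abs]
  rw [this, ← Real.rpow_add (abs_pos.2 hw)]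
  congr 1; ring

lemma chordExcess_eq {α : ℝ} {γ : ℝ → Rn n} (hγ : ContDiff ℝ 1 γ) {u w : ℝ} (hw : w ≠ 0) :
    chordExcess α γ u w =
      |w| ^ (-α) * (1 - ‖∫ s in (0:ℝ)..1, deriv γ (u + s * w)‖ ^ 2) := by
  rw [chordExcess, norm_chord_eq hγ, mul_pow, sq_abs, ← rpow_neg_add_two_mul_sq α hw]
  ring

lemma leadingVariation_eq {α : ℝ} {γ h : ℝ → Rn n} (hγ : ContDiff ℝ 1 γ) (hh : ContDiff ℝ 1 h)
    {u w : ℝ} (hw : w ≠ 0) :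
    leadingVariation α γ h u w = |w| ^ (-α) *
      ((∫ s in (0:ℝ)..1, ⟪deriv γ (u + s * w), deriv h (u + s * w)⟫) -
        ⟪∫ s in (0:ℝ)..1, deriv γ (u + s * w), ∫ s in (0:ℝ)..1, deriv h (u + s * w)⟫) := by
  rw [leadingVariation, ← smul_mean_deriv hγ, ← smul_mean_deriv hh, inner_smul_left,
    inner_smul_right, ← rpow_neg_add_two_mul_sq α hw]
  simp only [conj_trivial]
  ring

lemma deriv_add_smul {γ h : ℝ → Rn n} (hγ : ContDiff ℝ 1 γ) (hh : ContDiff ℝ 1 h) (τ u : ℝ) :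
    deriv (γ + τ • h) u = deriv γ u + τ • deriv h u :=
  ((hγ.hasDerivAt_deriv u).add ((hh.hasDerivAt_deriv u).const_smul τ)).deriv

/-- The density of an arc-length curve. -/
lemma ohIntegrand_arcLength {α : ℝ} {γ : ℝ → Rn n} (hγ : ContDiff ℝ 1 γ)
    (h1 : ArcLengthParam γ) {u w : ℝ} (hw2 : |w| ≤ 1 / 2) :
    ohIntegrand α γ u w = |w| ^ (-α) *
      ((‖∫ s in (0:ℝ)..1, deriv γ (u + s * w)‖ ^ 2) ^ (-(α / 2)) - 1) := by
  have hD : idist γ u w = |w| := by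
    have h1' : ∀ u, ‖deriv γ u‖ = 1 := h1
    rw [idist, arcLen_eq, curveLen]
    simp only [h1']
    simp only [intervalIntegral.integral_const, sub_zero, smul_eq_mul, mul_one]
    exact min_eq_left (by linarith)
  rw [ohIntegrand_eq hγ (by rw [hD]; exact abs_nonneg w), hD, h1 u, h1 (u + w)]
  ring

lemma abs_mul_sub_one_le {t a b : ℝ} (ht0 : 0 ≤ t) (ht : t ≤ 1 / 4)
    (ha : 1 - t ≤ a ∧ a ≤ 1 + t) (hb : 1 - t ≤ b ∧ b ≤ 1 + t) :
    |a * b - 1| ≤ 3 * t ∧ |a * b| ≤ 2 := by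
  obtain ⟨a1, a2⟩ := ha
  obtain ⟨b1, b2⟩ := hb
  have l1 : (1 - t) * (1 - t) ≤ a * b := by gcongr <;> linarith
  have l2 : a * b ≤ (1 + t) * (1 + t) := by gcongr <;> linarith
  have l3 : 0 ≤ a * b := by nlinarith
  refine ⟨abs_le.2 ⟨by nlinarith, by nlinarith⟩, ?_⟩
  rw [abs_of_nonneg l3]; nlinarith

/-- Pointwise expansion of the energy density of a perturbed curve, with a first-order constant
that sees the perturbation only through the size of its derivative. -/
lemma exists_abs_ohIntegrand_expansion_le {α : ℝ} (hα : α ∈ Ioo (2:ℝ) 3) {γ : ℝ → Rn n}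
    (hγ : ContDiff ℝ 1 γ) (h1 : ArcLengthParam γ) {c : ℝ} (hc0 : 0 < c) (hc1 : c ≤ 1)
    (hc : ∀ u w, |w| ≤ 1 / 2 → c * |w| ≤ ‖γ (u + w) - γ u‖) :
    ∃ C, 0 ≤ C ∧ ∀ (h : ℝ → Rn n) (H H₂ : ℝ), ContDiff ℝ 1 h → (∀ u, ‖deriv h u‖ ≤ H) →
      (∀ u v, ‖deriv h u - deriv h v‖ ≤ H₂ * |u - v|) →
      ∃ K, 0 ≤ K ∧ ∀ τ u w : ℝ, |τ| * H ≤ c / 4 → w ≠ 0 → |w| < 1 / 2 →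
        |ohIntegrand α (γ + τ • h) u w - ohIntegrand α γ u w -
            α * τ * leadingVariation α γ h u w| ≤
          C * (|τ| * H) * (1 + chordExcess α γ u w) +
            τ ^ 2 * K * (chordExcess α γ u w + |w| ^ (2 - α)) := by
  obtain ⟨hα2, hα3⟩ := hα
  set m := c ^ 2 / 4 with hm
  have hm0 : 0 < m := by positivity
  have hm4 : m ≤ 1 / 4 := by rw [hm]; nlinarith
  obtain ⟨C₁, hC₁, hexp⟩ := exists_abs_mean_energy_le (n := n) (p := α / 2) (m := m)
    (by linarith) hm0 hm4
  obtain ⟨C₃, hC₃, hint⟩ := exists_abs_intrinsic_sub_le (α := α) (by linarith)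
  set C₂ := α / 2 * m ^ (-(α / 2) - 1) with hC₂d
  have hC₂ : 0 ≤ C₂ := by positivity
  refine ⟨2 * C₁ + 3 * C₂ + 2 * C₃, by positivity, fun h H H₂ hh hH hL => ?_⟩
  have hH0 : 0 ≤ H := (norm_nonneg _).trans (hH 0)
  have hH₂ : 0 ≤ H₂ := by
    have := (norm_nonneg _).trans (hL 0 1); norm_num at this; exact this
  obtain ⟨K, hK, hexp⟩ := hexp H H₂ hH0
  refine ⟨2 * K + 9 * H * (1 + H₂ ^ 2), by positivity, fun τ u w hτ hw0 hw2 => ?_⟩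
  have hγc := hγ.continuous_deriv_one
  have hhc := hh.continuous_deriv_one
  have hg : ContDiff ℝ 1 (γ + τ • h) := hγ.add (contDiff_const.smul hh)
  set T : ℝ → Rn n := fun s => deriv γ (u + s * w) with hT
  set η : ℝ → Rn n := fun s => deriv h (u + s * w) with hη
  have hTc : Continuous T := by fun_prop
  have hηc : Continuous η := by fun_prop
  have hT1 : ∀ s, ‖T s‖ = 1 := fun s => h1 _
  have hηH : ∀ s, ‖η s‖ ≤ H := fun s => hH _
  have hδ : ∀ s ∈ Icc (0:ℝ) 1, ‖η s - η 0‖ ≤ H₂ * |w| := fun s hs => by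
    refine (hL _ _).trans (mul_le_mul_of_nonneg_left ?_ hH₂)
    rw [show u + s * w - (u + 0 * w) = s * w by ring, abs_mul, abs_of_nonneg hs.1]
    exact mul_le_of_le_one_left (abs_nonneg w) hs.2
  have hτ4 : |τ| * H ≤ 1 / 4 := by linarith
  have ht0 : 0 ≤ |τ| * H := by positivity
  have hwp : 0 < |w| := abs_pos.2 hw0
  have hTm : c ≤ ‖∫ s in (0:ℝ)..1, T s‖ := by
    have := hc u w hw2.le
    rw [norm_chord_eq hγ, mul_comm] at this
    exact le_of_mul_le_mul_left this hwp
  have hηm : ‖∫ s in (0:ℝ)..1, η s‖ ≤ H := norm_integral_unit_le hηH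
  have hx₀ : m ≤ ‖∫ s in (0:ℝ)..1, T s‖ ^ 2 := by
    rw [hm]; nlinarith
  have hxl : c / 2 ≤ ‖(∫ s in (0:ℝ)..1, T s) + τ • ∫ s in (0:ℝ)..1, η s‖ := by
    have e1 := norm_sub_le ((∫ s in (0:ℝ)..1, T s) + τ • ∫ s in (0:ℝ)..1, η s)
      (τ • ∫ s in (0:ℝ)..1, η s)
    rw [add_sub_cancel_right] at e1
    have e2 : ‖τ • ∫ s in (0:ℝ)..1, η s‖ ≤ |τ| * H := by
      rw [norm_smul, Real.norm_eq_abs]; gcongr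
    linarith
  have hx : m ≤ ‖(∫ s in (0:ℝ)..1, T s) + τ • ∫ s in (0:ℝ)..1, η s‖ ^ 2 := by
    rw [hm]; nlinarith
  have hM := hexp T η |w| τ hTc hηc hT1 hηH hδ hτ4 hx₀ hx
  have hβ := abs_mean_covariance_le hTc hηc hT1 hδ
  have hT1' : ‖∫ s in (0:ℝ)..1, T s‖ ≤ 1 := norm_integral_unit_le fun s => (hT1 s).le
  have hspeed : ∀ v, 1 - |τ| * H ≤ ‖deriv γ v + τ • deriv h v‖ ∧
      ‖deriv γ v + τ • deriv h v‖ ≤ 1 + |τ| * H := fun v => norm_add_smul_bounds (h1 v) (hH v)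
  obtain ⟨hR1, hR2⟩ := mean_norm_bounds (ρ := fun s => ‖T s + τ • η s‖) (by fun_prop)
    fun s => hspeed _
  obtain ⟨hℓ1, hℓ2⟩ := mean_norm_bounds (ρ := fun v => ‖deriv γ v + τ • deriv h v‖) (by fun_prop)
    hspeed
  have hκ := hint |w| _ _ (|τ| * H) hw2.le hwp.le ht0 hτ4 hR1 hR2 hℓ1 hℓ2
  have hmean : ∫ s in (0:ℝ)..1, deriv (γ + τ • h) (u + s * w) =
      (∫ s in (0:ℝ)..1, T s) + τ • ∫ s in (0:ℝ)..1, η s := by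
    simp only [deriv_add_smul hγ hh]
    have hη' : Continuous fun s => τ • η s := hηc.const_smul τ
    rw [← intervalIntegral.integral_smul, ← intervalIntegral.integral_add
      (hTc.intervalIntegrable _ _) (hη'.intervalIntegrable _ _)]
  have hD : idist (γ + τ • h) u w = min (|w| * ∫ s in (0:ℝ)..1, ‖T s + τ • η s‖)
      ((∫ v in (0:ℝ)..1, ‖deriv γ v + τ • deriv h v‖) -
        |w| * ∫ s in (0:ℝ)..1, ‖T s + τ • η s‖) := by
    rw [idist, arcLen_eq, curveLen]
    simp only [deriv_add_smul hγ hh, hT, hη]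
  have hD0 : 0 ≤ idist (γ + τ • h) u w := by
    rw [hD]
    refine le_min (mul_nonneg hwp.le (by linarith)) ?_
    nlinarith
  rw [ohIntegrand_eq hg hD0, ohIntegrand_arcLength hγ h1 hw2.le, leadingVariation_eq hγ hh hw0,
    chordExcess_eq hγ hw0, hmean, hD, deriv_add_smul hγ hh, deriv_add_smul hγ hh]
  have hA := mul_rpow_neg_eq (α := α) (a := |w|) hwp.le
    (show 0 ≤ ∫ s in (0:ℝ)..1, ‖T s + τ • η s‖ by linarith)
  rw [hA] at hκ
  have hq2 : |w| ^ (2 - α) = |w| ^ (-α) * |w| ^ 2 := by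
    rw [← Real.rpow_natCast, ← Real.rpow_add hwp]; congr 1; push_cast; ring
  rw [hq2]
  set A := |w| * ∫ s in (0:ℝ)..1, ‖T s + τ • η s‖
  set Dd := min A ((∫ v in (0:ℝ)..1, ‖deriv γ v + τ • deriv h v‖) - A)
  set P := ‖deriv γ (u + w) + τ • deriv h (u + w)‖ * ‖deriv γ u + τ • deriv h u‖ with hP
  have hP12 : |P - 1| ≤ 3 * (|τ| * H) ∧ |P| ≤ 2 := by
    exact abs_mul_sub_one_le ht0 hτ4 (hspeed (u + w)) (hspeed u)
  have hg2 : |(‖∫ s in (0:ℝ)..1, T s‖ ^ 2) ^ (-(α / 2)) - 1| ≤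
      C₂ * (1 - ‖∫ s in (0:ℝ)..1, T s‖ ^ 2) := by
    have hx1 : ‖∫ s in (0:ℝ)..1, T s‖ ^ 2 ≤ 1 := pow_le_one₀ (norm_nonneg _) hT1'
    have := abs_rpow_neg_sub_le (q := α / 2) (by linarith) hm0 hx₀ (show m ≤ 1 by linarith)
    rwa [Real.one_rpow, abs_sub_comm (‖∫ s in (0:ℝ)..1, T s‖ ^ 2) (1:ℝ), abs_of_nonneg (sub_nonneg.2 hx1)] at this
  have hν : 0 ≤ 1 - ‖∫ s in (0:ℝ)..1, T s‖ ^ 2 :=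
    sub_nonneg.2 (pow_le_one₀ (norm_nonneg _) hT1')
  rw [show 2 * (α / 2) * τ = α * τ by ring] at hM
  have := abs_energy_combination_le (q := |w| ^ (-α)) (by linarith) hα3.le (by positivity) hν hH0
    hC₁ hC₂ hC₃ hK hM hβ hP12.1 hP12.2 hg2 hκ
  refine le_of_eq_of_le ?_ this
  congr 1
  ring

lemma ae_strip : ∀ᵐ p ∂stripMeasure, p.2 ≠ 0 ∧ |p.2| < 1 / 2 := by
  have h : ∀ᵐ w ∂(volume.restrict (Ioo (-(1:ℝ)/2) (1/2))), w ≠ 0 ∧ |w| < 1 / 2 := by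
    filter_upwards [ae_restrict_mem measurableSet_Ioo,
      ae_restrict_of_ae (Measure.ae_ne volume (0:ℝ))] with w hw h0
    exact ⟨h0, abs_lt.2 ⟨by linarith [hw.1], by linarith [hw.2]⟩⟩
  exact Measure.quasiMeasurePreserving_snd.ae h

lemma continuous_mean_comp {F : Type*} [NormedAddCommGroup F] [NormedSpace ℝ F] {f : ℝ → F}
    (hf : Continuous f) :
    Continuous fun p : ℝ × ℝ => ∫ s in (0:ℝ)..1, f (p.1 + s * p.2) :=
  intervalIntegral.continuous_parametric_intervalIntegral_of_continuous'
    (f := fun (p : ℝ × ℝ) s => f (p.1 + s * p.2)) (by fun_prop) 0 1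

lemma measurable_ohIntegrand {α : ℝ} {γ : ℝ → Rn n} (hγ : ContDiff ℝ 1 γ) :
    Measurable fun p : ℝ × ℝ => ohIntegrand α γ p.1 p.2 := by
  have hc : Measurable (deriv γ) := hγ.continuous_deriv_one.measurable
  have h0 : Measurable γ := hγ.continuous.measurable
  have h1 : Measurable fun p : ℝ × ℝ => ∫ s in (0:ℝ)..1, ‖deriv γ (p.1 + s * p.2)‖ :=
    (continuous_mean_comp hγ.continuous_deriv_one.norm).measurable
  simp only [ohIntegrand, idist, arcLen_eq]
  fun_prop

lemma measurable_leadingVariation {α : ℝ} {γ h : ℝ → Rn n} (hγ : ContDiff ℝ 1 γ)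
    (hh : ContDiff ℝ 1 h) : Measurable fun p : ℝ × ℝ => leadingVariation α γ h p.1 p.2 := by
  have h0 : Measurable γ := hγ.continuous.measurable
  have h0' : Measurable h := hh.continuous.measurable
  have h1 : Measurable fun p : ℝ × ℝ =>
      ∫ s in (0:ℝ)..1, ⟪deriv γ (p.1 + s * p.2), deriv h (p.1 + s * p.2)⟫ :=
    (continuous_mean_comp (f := fun x => ⟪deriv γ x, deriv h x⟫)
      (hγ.continuous_deriv_one.inner hh.continuous_deriv_one)).measurable
  simp only [leadingVariation]
  fun_prop

lemma oharaE_eq_lintegral_strip {α : ℝ} {γ : ℝ → Rn n} (hγ : ContDiff ℝ 1 γ) :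
    oharaE α γ = ∫⁻ p, ENNReal.ofReal (ohIntegrand α γ p.1 p.2) ∂stripMeasure := by
  rw [oharaE, stripMeasure, lintegral_prod _ (measurable_ohIntegrand hγ).ennreal_ofReal.aemeasurable]

lemma integral_le_oharaER {α : ℝ} {γ : ℝ → Rn n} (hγ : ContDiff ℝ 1 γ)
    (hi : Integrable (fun p : ℝ × ℝ => ohIntegrand α γ p.1 p.2) stripMeasure) :
    ∫ p, ohIntegrand α γ p.1 p.2 ∂stripMeasure ≤ oharaER α γ := by
  rw [oharaER, oharaE_eq_lintegral_strip hγ,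
    integral_eq_lintegral_pos_part_sub_lintegral_neg_part hi]
  linarith [ENNReal.toReal_nonneg
    (a := ∫⁻ p, ENNReal.ofReal (-ohIntegrand α γ p.1 p.2) ∂stripMeasure)]

/-- Energy density of arc-length curves is controlled by the chord excess. -/
lemma exists_ohIntegrand_le {α : ℝ} (hα : α ∈ Ioo (2:ℝ) 3) {γ : ℝ → Rn n}
    (hγ : ContDiff ℝ 1 γ) (h1 : ArcLengthParam γ) {c : ℝ} (hc0 : 0 < c)
    (hc : ∀ u w, |w| ≤ 1 / 2 → c * |w| ≤ ‖γ (u + w) - γ u‖) :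
    ∃ C, ∀ u w : ℝ, w ≠ 0 → |w| < 1 / 2 →
      0 ≤ ohIntegrand α γ u w ∧ ohIntegrand α γ u w ≤ C * chordExcess α γ u w := by
  obtain ⟨hα2, hα3⟩ := hα
  refine ⟨α / 2 * (c ^ 2) ^ (-(α / 2) - 1), fun u w hw hw2 => ?_⟩
  have hwp : 0 < |w| := abs_pos.2 hw
  have hTm : c ≤ ‖∫ s in (0:ℝ)..1, deriv γ (u + s * w)‖ := by
    have := hc u w hw2.le
    rw [norm_chord_eq hγ, mul_comm] at this
    exact le_of_mul_le_mul_left this hwp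
  have hT1 : ‖∫ s in (0:ℝ)..1, deriv γ (u + s * w)‖ ≤ 1 :=
    norm_integral_unit_le fun s => (h1 _).le
  rw [ohIntegrand_arcLength hγ h1 hw2.le, chordExcess_eq hγ hw]
  have hx1 : ‖∫ s in (0:ℝ)..1, deriv γ (u + s * w)‖ ^ 2 ≤ 1 := pow_le_one₀ (norm_nonneg _) hT1
  have hx0 : c ^ 2 ≤ ‖∫ s in (0:ℝ)..1, deriv γ (u + s * w)‖ ^ 2 := by gcongr
  set x₀ := ‖∫ s in (0:ℝ)..1, deriv γ (u + s * w)‖ ^ 2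
  have hx0p : 0 < x₀ := (by positivity : 0 < c ^ 2).trans_le hx0
  constructor
  · refine mul_nonneg (by positivity) (sub_nonneg.2 ?_)
    exact Real.one_le_rpow_of_pos_of_le_one_of_nonpos hx0p hx1 (by linarith)
  · have := abs_rpow_neg_sub_le (q := α / 2) (by linarith) (by positivity) hx0
      (hx0.trans hx1)
    rw [Real.one_rpow, abs_sub_comm x₀ (1:ℝ), abs_of_nonneg (sub_nonneg.2 hx1)] at this
    calc |w| ^ (-α) * (x₀ ^ (-(α / 2)) - 1)
        ≤ |w| ^ (-α) * (α / 2 * (c ^ 2) ^ (-(α / 2) - 1) * (1 - x₀)) := by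
          gcongr
          exact (le_abs_self _).trans this
      _ = _ := by ring

lemma abs_leadingVariation_le {α : ℝ} {γ h : ℝ → Rn n} (hγ : ContDiff ℝ 1 γ)
    (h1 : ArcLengthParam γ) (hh : ContDiff ℝ 1 h) {H₂ : ℝ}
    (hL : ∀ u v, ‖deriv h u - deriv h v‖ ≤ H₂ * |u - v|) {u w : ℝ} (hw : w ≠ 0) :
    |leadingVariation α γ h u w| ≤
      (chordExcess α γ u w + H₂ ^ 2 * |w| ^ (2 - α)) / 2 := by
  have hγc := hγ.continuous_deriv_one
  have hhc := hh.continuous_deriv_one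
  have hH₂ : 0 ≤ H₂ := by
    have := (norm_nonneg _).trans (hL 0 1); norm_num at this; exact this
  have hwp : 0 < |w| := abs_pos.2 hw
  have hδ : ∀ s ∈ Icc (0:ℝ) 1,
      ‖deriv h (u + s * w) - deriv h (u + 0 * w)‖ ≤ H₂ * |w| := fun s hs => by
    refine (hL _ _).trans (mul_le_mul_of_nonneg_left ?_ hH₂)
    rw [show u + s * w - (u + 0 * w) = s * w by ring, abs_mul, abs_of_nonneg hs.1]
    exact mul_le_of_le_one_left (abs_nonneg w) hs.2
  have hβ := abs_mean_covariance_le (T := fun s => deriv γ (u + s * w))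
    (η := fun s => deriv h (u + s * w)) (by fun_prop) (by fun_prop) (fun s => h1 _) hδ
  have hq2 : |w| ^ (2 - α) = |w| ^ (-α) * |w| ^ 2 := by
    rw [← Real.rpow_natCast, ← Real.rpow_add hwp]; congr 1; push_cast; ring
  rw [leadingVariation_eq hγ hh hw, chordExcess_eq hγ hw, hq2, abs_mul,
    abs_of_nonneg (by positivity : 0 ≤ |w| ^ (-α))]
  refine (mul_le_mul_of_nonneg_left hβ (by positivity)).trans (le_of_eq ?_)
  ring

lemma abs_sub_le_of_one_sided_expansion {Φ : ℝ → ℝ} {Φ₀ d b e k : ℝ}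
    (ht : Tendsto (fun τ => (Φ τ - Φ₀) / τ) (𝓝[≠] 0) (𝓝 d))
    (hb : ∀ᶠ τ in 𝓝[≠] (0:ℝ), τ * b - |τ| * e - τ ^ 2 * k ≤ Φ τ - Φ₀) : |d - b| ≤ e := by
  have hr : Tendsto (fun τ : ℝ => (Φ τ - Φ₀) / τ) (𝓝[>] 0) (𝓝 d) :=
    ht.mono_left (nhdsWithin_mono _ fun x hx => ne_of_gt hx)
  have hl : Tendsto (fun τ : ℝ => (Φ τ - Φ₀) / τ) (𝓝[<] 0) (𝓝 d) :=
    ht.mono_left (nhdsWithin_mono _ fun x hx => ne_of_lt hx)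
  have hc : ∀ s, Tendsto (fun τ : ℝ => s - τ * k) (𝓝 0) (𝓝 s) := fun s => by
    have : Continuous fun τ : ℝ => s - τ * k := by fun_prop
    simpa using this.tendsto 0
  have h1 : b - e ≤ d := by
    refine le_of_tendsto_of_tendsto ((hc (b - e)).mono_left nhdsWithin_le_nhds) hr ?_
    filter_upwards [hb.filter_mono (nhdsWithin_mono _ fun x hx => ne_of_gt hx),
      self_mem_nhdsWithin] with τ h hτ
    have hτ : 0 < τ := hτ
    rw [le_div_iff₀ hτ]
    rw [abs_of_pos hτ] at h
    linarith
  have h2 : d ≤ b + e := by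
    refine le_of_tendsto_of_tendsto hl ((hc (b + e)).mono_left nhdsWithin_le_nhds) ?_
    filter_upwards [hb.filter_mono (nhdsWithin_mono _ fun x hx => ne_of_lt hx),
      self_mem_nhdsWithin] with τ h hτ
    have hτ : τ < 0 := hτ
    rw [div_le_iff_of_neg hτ]
    rw [abs_of_neg hτ] at h
    linarith
  exact abs_le.2 ⟨by linarith, by linarith⟩

/-- The leading part of the first variation determines it up to a multiple of the size of the
derivative of the direction. -/
lemma exists_abs_dirDeriv_sub_le {α : ℝ} (hα : α ∈ Ioo (2:ℝ) 3) {γ : ℝ → Rn n}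
    (hγ : ContDiff ℝ 1 γ) (h1 : ArcLengthParam γ) {c : ℝ} (hc0 : 0 < c) (hc1 : c ≤ 1)
    (hc : ∀ u w, |w| ≤ 1 / 2 → c * |w| ≤ ‖γ (u + w) - γ u‖)
    (hN : Integrable (fun p : ℝ × ℝ => chordExcess α γ p.1 p.2) stripMeasure) :
    ∃ C, 0 ≤ C ∧ ∀ (h : ℝ → Rn n) (H H₂ : ℝ), ContDiff ℝ 1 h → (∀ u, ‖deriv h u‖ ≤ H) →
      (∀ u v, ‖deriv h u - deriv h v‖ ≤ H₂ * |u - v|) →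
      Integrable (fun p : ℝ × ℝ => leadingVariation α γ h p.1 p.2) stripMeasure ∧
      ∀ d, HasDirDeriv (oharaER α) γ h d →
        |d - α * ∫ p, leadingVariation α γ h p.1 p.2 ∂stripMeasure| ≤ C * H := by
  obtain ⟨C, hC, hexp⟩ := exists_abs_ohIntegrand_expansion_le hα hγ h1 hc0 hc1 hc
  obtain ⟨C₂, hf₀⟩ := exists_ohIntegrand_le hα hγ h1 hc0 hc
  have hW : Integrable (fun p : ℝ × ℝ => |p.2| ^ (2 - α)) stripMeasure :=
    integrable_strip_abs_rpow (by linarith [hα.2])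
  have hN0 : ∀ p : ℝ × ℝ, 0 ≤ chordExcess α γ p.1 p.2 := fun p =>
    mul_nonneg (by positivity) (chordDefect_nonneg hγ.hasDerivAt_deriv h1 _ _)
  have hI₁ : Integrable (fun p : ℝ × ℝ => 1 + chordExcess α γ p.1 p.2) stripMeasure :=
    (integrable_const 1).add hN
  have hI₂ : Integrable (fun p : ℝ × ℝ => chordExcess α γ p.1 p.2 + |p.2| ^ (2 - α))
    stripMeasure := hN.add hW
  have hi₀ : Integrable (fun p : ℝ × ℝ => ohIntegrand α γ p.1 p.2) stripMeasure := by
    refine (hN.const_mul C₂).mono' (measurable_ohIntegrand hγ).aestronglyMeasurable ?_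
    filter_upwards [ae_strip] with p hp
    obtain ⟨a, b⟩ := hf₀ p.1 p.2 hp.1 hp.2
    rwa [Real.norm_of_nonneg a]
  have hE₀ : oharaER α γ = ∫ p, ohIntegrand α γ p.1 p.2 ∂stripMeasure := by
    rw [oharaER, oharaE_eq_lintegral_strip hγ, integral_eq_lintegral_of_nonneg_ae _
      (measurable_ohIntegrand hγ).aestronglyMeasurable]
    filter_upwards [ae_strip] with p hp
    exact (hf₀ p.1 p.2 hp.1 hp.2).1
  refine ⟨C * ∫ p, (1 + chordExcess α γ p.1 p.2) ∂stripMeasure,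
    mul_nonneg hC (integral_nonneg fun p => add_nonneg zero_le_one (hN0 p)), fun h H H₂ hh hH hL => ?_⟩
  have hB : Integrable (fun p : ℝ × ℝ => leadingVariation α γ h p.1 p.2) stripMeasure := by
    refine ((hN.add (hW.const_mul (H₂ ^ 2))).div_const 2).mono'
      (measurable_leadingVariation hγ hh).aestronglyMeasurable ?_
    filter_upwards [ae_strip] with p hp
    exact abs_leadingVariation_le hγ h1 hh hL hp.1
  refine ⟨hB, fun d hd => ?_⟩
  obtain ⟨K, hK, hexp⟩ := hexp h H H₂ hh hH hL
  set I₁ := ∫ p, (1 + chordExcess α γ p.1 p.2) ∂stripMeasure with hI₁d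
  set I₂ := ∫ p, (chordExcess α γ p.1 p.2 + |p.2| ^ (2 - α)) ∂stripMeasure with hI₂d
  refine abs_sub_le_of_one_sided_expansion (Φ := fun τ => oharaER α (γ + τ • h))
    (Φ₀ := oharaER α γ) (k := K * I₂) hd ?_
  have hsmall : ∀ᶠ τ in 𝓝[≠] (0:ℝ), |τ| * H < c / 4 := by
    have : Continuous fun τ : ℝ => |τ| * H := by fun_prop
    refine (this.tendsto 0).eventually_lt_const ?_ |>.filter_mono nhdsWithin_le_nhds
    simpa using hc0
  filter_upwards [hsmall] with τ hτ
  have hg : ContDiff ℝ 1 (γ + τ • h) := hγ.add (contDiff_const.smul hh)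
  have hbd : ∀ᵐ p ∂stripMeasure, |ohIntegrand α (γ + τ • h) p.1 p.2 - ohIntegrand α γ p.1 p.2 -
      α * τ * leadingVariation α γ h p.1 p.2| ≤
      C * (|τ| * H) * (1 + chordExcess α γ p.1 p.2) +
        τ ^ 2 * K * (chordExcess α γ p.1 p.2 + |p.2| ^ (2 - α)) := by
    filter_upwards [ae_strip] with p hp
    exact hexp τ p.1 p.2 hτ.le hp.1 hp.2
  have hbi : Integrable (fun p : ℝ × ℝ => C * (|τ| * H) * (1 + chordExcess α γ p.1 p.2) +
      τ ^ 2 * K * (chordExcess α γ p.1 p.2 + |p.2| ^ (2 - α))) stripMeasure :=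
    (hI₁.const_mul _).add (hI₂.const_mul _)
  have hαB : Integrable (fun p : ℝ × ℝ => α * τ * leadingVariation α γ h p.1 p.2) stripMeasure :=
    hB.const_mul _
  have hR : Integrable (fun p : ℝ × ℝ => ohIntegrand α (γ + τ • h) p.1 p.2 -
      ohIntegrand α γ p.1 p.2 - α * τ * leadingVariation α γ h p.1 p.2) stripMeasure :=
    hbi.mono' (((measurable_ohIntegrand hg).sub (measurable_ohIntegrand hγ)).sub
      ((measurable_leadingVariation hγ hh).const_mul _)).aestronglyMeasurable hbd
  have hiτ : Integrable (fun p : ℝ × ℝ => ohIntegrand α (γ + τ • h) p.1 p.2) stripMeasure := by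
    refine ((hR.add hαB).add hi₀).congr (Eventually.of_forall fun p => ?_)
    simp only [Pi.add_apply]
    ring
  have hle := integral_le_oharaER hg hiτ
  have hdiff : Integrable (fun p : ℝ × ℝ => ohIntegrand α (γ + τ • h) p.1 p.2 -
      ohIntegrand α γ p.1 p.2) stripMeasure := hiτ.sub hi₀
  have hint : -(C * (|τ| * H) * I₁ + τ ^ 2 * K * I₂) ≤
      (∫ p, ohIntegrand α (γ + τ • h) p.1 p.2 ∂stripMeasure) -
        (∫ p, ohIntegrand α γ p.1 p.2 ∂stripMeasure) -
        α * τ * ∫ p, leadingVariation α γ h p.1 p.2 ∂stripMeasure := by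
    rw [← integral_const_mul (α * τ), ← integral_sub hiτ hi₀, ← integral_sub hdiff hαB, hI₁d, hI₂d,
      ← integral_const_mul, ← integral_const_mul,
      ← integral_add (hI₁.const_mul _) (hI₂.const_mul _), ← integral_neg]
    refine integral_mono_ae hbi.neg hR ?_
    filter_upwards [hbd] with p hp
    exact (abs_le.1 hp).1
  rw [hE₀]
  linarith

lemma Function.Periodic.integral_comp_add_one {E : Type*} [NormedAddCommGroup E] [NormedSpace ℝ E]
    {f : ℝ → E} (hf : Function.Periodic f 1) (a : ℝ) :
    ∫ u in (0:ℝ)..1, f (u + a) = ∫ u in (0:ℝ)..1, f u := by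
  rw [intervalIntegral.integral_comp_add_right, zero_add, add_comm 1 a,
    hf.intervalIntegral_add_eq a 0, zero_add]

/-- The sinusoidal wave of frequency `k` and phase `θ`. -/
def cosWave (k : ℤ) (θ u : ℝ) : ℝ := Real.cos (2 * Real.pi * k * u + θ)

lemma continuous_cosWave (k : ℤ) (θ : ℝ) : Continuous (cosWave k θ) := by
  unfold cosWave; fun_prop

lemma abs_cosWave_le_one (k : ℤ) (θ u : ℝ) : |cosWave k θ u| ≤ 1 := Real.abs_cos_le_one _

lemma periodic_cosWave (k : ℤ) (θ : ℝ) : Function.Periodic (cosWave k θ) 1 := fun u => by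
  unfold cosWave
  rw [show 2 * Real.pi * k * (u + 1) + θ = 2 * Real.pi * k * u + θ + k * (2 * Real.pi) by ring,
    Real.cos_add_int_mul_two_pi]

lemma hasDerivAt_cosWave (k : ℤ) (θ u : ℝ) :
    HasDerivAt (cosWave k θ) (2 * Real.pi * k * cosWave k (θ + Real.pi / 2) u) u := by
  have h : HasDerivAt (fun u : ℝ => 2 * Real.pi * k * u + θ) (2 * Real.pi * k) u := by
    simpa using ((hasDerivAt_id u).const_mul (2 * Real.pi * k)).add_const θ
  have := h.cos
  unfold cosWave
  rw [← add_assoc, Real.cos_add_pi_div_two]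
  convert this using 1
  ring

lemma cosWave_add_pi (k : ℤ) (θ u : ℝ) : cosWave k (θ + Real.pi) u = -cosWave k θ u := by
  rw [cosWave, ← add_assoc, Real.cos_add_pi, cosWave]

lemma cosWave_add_add_cosWave_sub (k : ℤ) (θ u w : ℝ) :
    cosWave k θ (u + w) + cosWave k θ (u - w) =
      2 * Real.cos (2 * Real.pi * k * w) * cosWave k θ u := by
  unfold cosWave
  rw [show 2 * Real.pi * k * (u + w) + θ = (2 * Real.pi * k * u + θ) + 2 * Real.pi * k * w by ring,
    show 2 * Real.pi * k * (u - w) + θ = (2 * Real.pi * k * u + θ) - 2 * Real.pi * k * w by ring,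
    Real.cos_add, Real.cos_sub]
  ring

lemma integral_deriv_mul_deriv_cosWave {f f' : ℝ → ℝ} (hd : ∀ u, HasDerivAt f (f' u) u)
    (hc : Continuous f') (hP : Function.Periodic f 1) (k : ℤ) (θ : ℝ) :
    ∫ u in (0:ℝ)..1, f' u * (2 * Real.pi * k * cosWave k (θ + Real.pi / 2) u) =
      (2 * Real.pi * k) ^ 2 * ∫ u in (0:ℝ)..1, f u * cosWave k θ u := by
  have hφ : ∀ u, HasDerivAt (fun u => 2 * Real.pi * k * cosWave k (θ + Real.pi / 2) u)
      (-(2 * Real.pi * k) ^ 2 * cosWave k θ u) u := fun u => by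
    refine ((hasDerivAt_cosWave k (θ + Real.pi / 2) u).const_mul (2 * Real.pi * k)).congr_deriv ?_
    rw [add_assoc θ, add_halves, cosWave_add_pi]
    ring
  have hcφ := continuous_cosWave k θ
  have := intervalIntegral.integral_mul_deriv_eq_deriv_mul (a := 0) (b := 1)
    (fun u _ => hd u) (fun u _ => hφ u) (hc.intervalIntegrable _ _)
    (Continuous.intervalIntegrable (by fun_prop) _ _)
  have e1 : f 1 = f 0 := by simpa using hP 0
  have e2 : cosWave k (θ + Real.pi / 2) 1 = cosWave k (θ + Real.pi / 2) 0 := by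
    simpa using periodic_cosWave k (θ + Real.pi / 2) 0
  rw [e1, e2, sub_self, zero_sub] at this
  rw [← neg_eq_iff_eq_neg.2 this, ← intervalIntegral.integral_neg,
    ← intervalIntegral.integral_const_mul]
  congr 1
  ext u
  ring

lemma integral_sub_mul_sub_cosWave {f : ℝ → ℝ} (hf : Continuous f) (hP : Function.Periodic f 1)
    (k : ℤ) (θ w : ℝ) :
    ∫ u in (0:ℝ)..1, (f (u + w) - f u) * (cosWave k θ (u + w) - cosWave k θ u) =
      (2 - 2 * Real.cos (2 * Real.pi * k * w)) * ∫ u in (0:ℝ)..1, f u * cosWave k θ u := by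
  have hφ := continuous_cosWave k θ
  have hPφ := periodic_cosWave k θ
  have h1 : ∫ u in (0:ℝ)..1, f (u + w) * cosWave k θ (u + w) =
      ∫ u in (0:ℝ)..1, f u * cosWave k θ u :=
    Function.Periodic.integral_comp_add_one (f := fun u => f u * cosWave k θ u) (hP.mul hPφ) w
  have h2 : ∫ u in (0:ℝ)..1, f (u + w) * cosWave k θ u =
      ∫ u in (0:ℝ)..1, f u * cosWave k θ (u - w) := by
    rw [← Function.Periodic.integral_comp_add_one (f := fun u => f u * cosWave k θ (u - w))
      (fun u => by
        change f (u + 1) * cosWave k θ (u + 1 - w) = f u * cosWave k θ (u - w)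
        rw [hP u, show u + 1 - w = u - w + 1 by ring, hPφ]) w]
    simp
  have i1 : IntervalIntegrable (fun u => f (u + w) * cosWave k θ (u + w)) volume 0 1 :=
    Continuous.intervalIntegrable (by fun_prop) _ _
  have i2 : IntervalIntegrable (fun u => f (u + w) * cosWave k θ u) volume 0 1 :=
    Continuous.intervalIntegrable (by fun_prop) _ _
  have i3 : IntervalIntegrable (fun u => f u * cosWave k θ (u + w)) volume 0 1 :=
    Continuous.intervalIntegrable (by fun_prop) _ _
  have i4 : IntervalIntegrable (fun u => f u * cosWave k θ u) volume 0 1 :=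
    Continuous.intervalIntegrable (by fun_prop) _ _
  have i5 : IntervalIntegrable (fun u => f u * cosWave k θ (u - w)) volume 0 1 :=
    Continuous.intervalIntegrable (by fun_prop) _ _
  have h3 : (∫ u in (0:ℝ)..1, f u * cosWave k θ (u + w)) +
      ∫ u in (0:ℝ)..1, f u * cosWave k θ (u - w) =
      2 * Real.cos (2 * Real.pi * k * w) * ∫ u in (0:ℝ)..1, f u * cosWave k θ u := by
    rw [← intervalIntegral.integral_add i3 i5, ← intervalIntegral.integral_const_mul]
    congr 1
    ext u
    rw [← mul_add, cosWave_add_add_cosWave_sub]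
    ring
  have h4 : ∫ u in (0:ℝ)..1, (f (u + w) - f u) * (cosWave k θ (u + w) - cosWave k θ u) =
      (∫ u in (0:ℝ)..1, f (u + w) * cosWave k θ (u + w)) -
        (∫ u in (0:ℝ)..1, f (u + w) * cosWave k θ u) -
        (∫ u in (0:ℝ)..1, f u * cosWave k θ (u + w)) + ∫ u in (0:ℝ)..1, f u * cosWave k θ u := by
    rw [← intervalIntegral.integral_sub i1 i2, ← intervalIntegral.integral_sub (i1.sub i2) i3,
      ← intervalIntegral.integral_add ((i1.sub i2).sub i3) i4]
    congr 1
    ext u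
    ring
  rw [h4, h1, h2]
  linarith

/-- The sinusoidal test direction along the `j`-th coordinate axis. -/
def waveDir (k : ℤ) (θ : ℝ) (j : Fin n) (u : ℝ) : Rn n := EuclideanSpace.single j (cosWave k θ u)

lemma hasDerivAt_waveDir (k : ℤ) (θ : ℝ) (j : Fin n) (u : ℝ) :
    HasDerivAt (waveDir k θ j)
      (EuclideanSpace.single j (2 * Real.pi * k * cosWave k (θ + Real.pi / 2) u) : Rn n) u := by
  have e : ∀ a : ℝ, (EuclideanSpace.single j a : Rn n) = a • EuclideanSpace.single j (1:ℝ) :=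
    fun a => by
      ext i
      by_cases hi : i = j <;> simp [hi]
  have h := (hasDerivAt_cosWave k θ u).smul_const (EuclideanSpace.single j (1:ℝ) : Rn n)
  rw [show waveDir k θ j = fun u => cosWave k θ u • (EuclideanSpace.single j (1:ℝ) : Rn n) from
    funext fun u => e _, e (2 * Real.pi * k * cosWave k (θ + Real.pi / 2) u)]
  exact h

lemma deriv_waveDir (k : ℤ) (θ : ℝ) (j : Fin n) (u : ℝ) :
    deriv (waveDir k θ j) u =
      (EuclideanSpace.single j (2 * Real.pi * k * cosWave k (θ + Real.pi / 2) u) : Rn n) :=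
  (hasDerivAt_waveDir k θ j u).deriv

lemma norm_deriv_waveDir_le (k : ℤ) (θ : ℝ) (j : Fin n) (u : ℝ) :
    ‖deriv (waveDir k θ j) u‖ ≤ 2 * Real.pi * |(k:ℝ)| := by
  rw [deriv_waveDir, PiLp.norm_single, Real.norm_eq_abs, abs_mul, abs_mul,
    abs_of_pos Real.two_pi_pos]
  exact mul_le_of_le_one_right (by positivity) (abs_cosWave_le_one _ _ _)

lemma norm_deriv_waveDir_sub_le (k : ℤ) (θ : ℝ) (j : Fin n) (u v : ℝ) :
    ‖deriv (waveDir k θ j) u - deriv (waveDir k θ j) v‖ ≤ (2 * Real.pi * |(k:ℝ)|) ^ 2 * |u - v| := by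
  have hpk : |2 * Real.pi * (k:ℝ)| = 2 * Real.pi * |(k:ℝ)| := by
    rw [abs_mul, abs_of_pos Real.two_pi_pos]
  have h : ∀ x, HasDerivAt (fun u => 2 * Real.pi * k * cosWave k (θ + Real.pi / 2) u)
      (2 * Real.pi * k * (2 * Real.pi * k * cosWave k (θ + Real.pi / 2 + Real.pi / 2) x)) x :=
    fun x => (hasDerivAt_cosWave k (θ + Real.pi / 2) x).const_mul _
  have := Convex.norm_image_sub_le_of_norm_hasDerivWithin_le (s := univ)
    (C := (2 * Real.pi * |(k:ℝ)|) ^ 2) (fun x _ => (h x).hasDerivWithinAt) (fun x _ => by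
      rw [Real.norm_eq_abs, abs_mul, abs_mul (_ * _) (cosWave _ _ _), hpk, ← mul_assoc, ← sq]
      exact mul_le_of_le_one_right (by positivity) (abs_cosWave_le_one _ _ _)) convex_univ
    (mem_univ v) (mem_univ u)
  rw [deriv_waveDir, deriv_waveDir]
  have e : ∀ a b : ℝ, (EuclideanSpace.single j a : Rn n) - EuclideanSpace.single j b =
      EuclideanSpace.single j (a - b) := fun a b => by
    ext i
    by_cases hi : i = j <;> simp [hi]
  rw [e, PiLp.norm_single]
  exact this

lemma periodic_waveDir (k : ℤ) (θ : ℝ) (j : Fin n) : Function.Periodic (waveDir k θ j) 1 :=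
  fun u => by rw [waveDir, periodic_cosWave k θ u, waveDir]

lemma contDiff_waveDir (k : ℤ) (θ : ℝ) (j : Fin n) : ContDiff ℝ 1 (waveDir k θ j) := by
  refine contDiff_one_iff_deriv.2
    ⟨fun u => (hasDerivAt_waveDir k θ j u).differentiableAt, ?_⟩
  refine (LipschitzWith.of_dist_le_mul (K := Real.toNNReal ((2 * Real.pi * |(k:ℝ)|) ^ 2))
    fun u v => ?_).continuous
  rw [dist_eq_norm, Real.dist_eq, Real.coe_toNNReal _ (by positivity)]
  exact norm_deriv_waveDir_sub_le k θ j u v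

lemma memH1_waveDir {σ : ℝ} (hσ : σ < 1) (k : ℤ) (θ : ℝ) (j : Fin n) :
    MemH1 σ (waveDir k θ j) := by
  refine ⟨periodic_waveDir k θ j, contDiff_waveDir k θ j, ?_⟩
  set L := (2 * Real.pi * |(k:ℝ)|) ^ 2 with hL
  have hint : IntegrableOn (fun w : ℝ => L ^ 2 * |w| ^ (1 - 2 * σ)) (Ioo (-(1:ℝ)/2) (1/2)) :=
    (integrableOn_abs_rpow (by linarith)).const_mul _
  have hb : ∀ u w : ℝ, ENNReal.ofReal
      (‖deriv (waveDir k θ j) (u + w) - deriv (waveDir k θ j) u‖ ^ 2 / |w| ^ (1 + 2 * σ)) ≤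
      ENNReal.ofReal (L ^ 2 * |w| ^ (1 - 2 * σ)) := fun u w => by
    refine ENNReal.ofReal_le_ofReal ?_
    rcases eq_or_ne w 0 with rfl | hw
    · simp only [add_zero, sub_self, norm_zero]
      rw [zero_pow two_ne_zero, zero_div]
      positivity
    have hwp : 0 < |w| := abs_pos.2 hw
    rw [div_le_iff₀ (by positivity), mul_assoc, ← Real.rpow_add hwp,
      show 1 - 2 * σ + (1 + 2 * σ) = ((2 : ℕ) : ℝ) by push_cast; ring, Real.rpow_natCast, ← mul_pow]
    refine pow_le_pow_left₀ (norm_nonneg _) ?_ 2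
    simpa using norm_deriv_waveDir_sub_le k θ j (u + w) u
  calc gagliardoSq σ (deriv (waveDir k θ j))
      ≤ ∫⁻ _ in Ioc (0:ℝ) 1, ∫⁻ w in Ioo (-(1:ℝ)/2) (1/2),
          ENNReal.ofReal (L ^ 2 * |w| ^ (1 - 2 * σ)) :=
        lintegral_mono fun u => lintegral_mono fun w => hb u w
    _ = ∫⁻ w in Ioo (-(1:ℝ)/2) (1/2), ENNReal.ofReal (L ^ 2 * |w| ^ (1 - 2 * σ)) := by simp
    _ < ⊤ := hint.lintegral_lt_top

lemma inner_single_eq (x : Rn n) (j : Fin n) (a : ℝ) :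
    ⟪x, (EuclideanSpace.single j a : Rn n)⟫ = x j * a := by
  rw [EuclideanSpace.inner_single_right]
  simp [mul_comm]

lemma integral_leadingVariation_waveDir (α : ℝ) {γ : ℝ → Rn n}
    (hγ : ContDiff ℝ 1 γ) (hP : Function.Periodic γ 1) (k : ℤ) (θ : ℝ) (j : Fin n) (w : ℝ) :
    ∫ u in (0:ℝ)..1, leadingVariation α γ (waveDir k θ j) u w =
      |w| ^ (-(α + 2)) * cosDefect (2 * Real.pi * k * w) *
        ∫ u in (0:ℝ)..1, γ u j * cosWave k θ u := by
  have hd : ∀ u, HasDerivAt (fun u => γ u j) (deriv γ u j) u := fun u =>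
    hasDerivAt_component (hγ.hasDerivAt_deriv u) j
  have hc : Continuous fun u => deriv γ u j :=
    (EuclideanSpace.proj (𝕜 := ℝ) j).continuous.comp hγ.continuous_deriv_one
  have hc0 : Continuous fun u => γ u j :=
    (EuclideanSpace.proj (𝕜 := ℝ) j).continuous.comp hγ.continuous
  have hPj : Function.Periodic (fun u => γ u j) 1 := fun u => by simp only [hP u]
  have hPd : Function.Periodic (fun u => deriv γ u j) 1 := fun u => by
    have : deriv γ (u + 1) = deriv γ u := by
      rw [← deriv_comp_add_const, show (fun x => γ (x + 1)) = γ from funext hP]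
    simp only [this]
  have hφ := continuous_cosWave k θ
  have hφ' := continuous_cosWave k (θ + Real.pi / 2)
  set g : ℝ → ℝ := fun x => deriv γ x j * (2 * Real.pi * k * cosWave k (θ + Real.pi / 2) x) with hg
  have hgc : Continuous g := by fun_prop
  have hgP : Function.Periodic g 1 := fun u => by
    have h1 := hPd u
    simp only [hg, periodic_cosWave k (θ + Real.pi / 2) u] at h1 ⊢
    rw [h1]
  have hin : ∀ u, leadingVariation α γ (waveDir k θ j) u w =
      |w| ^ (-(α + 2)) * (w ^ 2 * (∫ s in (0:ℝ)..1, g (u + s * w)) -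
        (γ (u + w) j - γ u j) * (cosWave k θ (u + w) - cosWave k θ u)) := fun u => by
    simp only [leadingVariation, deriv_waveDir, inner_single_eq, hg, waveDir, inner_sub_right,
      PiLp.sub_apply]
    ring
  have hmean : ∫ u in (0:ℝ)..1, ∫ s in (0:ℝ)..1, g (u + s * w) =
      (2 * Real.pi * k) ^ 2 * ∫ u in (0:ℝ)..1, γ u j * cosWave k θ u := by
    rw [intervalIntegral_intervalIntegral_swap]
    · simp only [hgP.integral_comp_add_one, intervalIntegral.integral_const, sub_zero, one_smul]
      exact integral_deriv_mul_deriv_cosWave hd hc hPj k θ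
    · have : Continuous (Function.uncurry fun u s => g (u + s * w)) := by fun_prop
      exact (this.continuousOn.integrableOn_compact (isCompact_uIcc.prod isCompact_uIcc)).mono_set
        (prod_mono uIoc_subset_uIcc uIoc_subset_uIcc)
  have hgm : Continuous fun u => ∫ s in (0:ℝ)..1, g (u + s * w) :=
    (continuous_mean_comp hgc).comp (by fun_prop : Continuous fun u : ℝ => (u, w))
  simp only [hin]
  rw [intervalIntegral.integral_const_mul, intervalIntegral.integral_sub,
    intervalIntegral.integral_const_mul, hmean, integral_sub_mul_sub_cosWave hc0 hPj, cosDefect]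
  · ring
  · exact Continuous.intervalIntegrable (by fun_prop) _ _
  · exact Continuous.intervalIntegrable (by fun_prop) _ _

lemma integral_strip_leadingVariation_waveDir {α : ℝ} {γ : ℝ → Rn n}
    (hγ : ContDiff ℝ 1 γ) (hP : Function.Periodic γ 1) (k : ℤ) (θ : ℝ) (j : Fin n)
    (hi : Integrable (fun p : ℝ × ℝ => leadingVariation α γ (waveDir k θ j) p.1 p.2)
      stripMeasure) :
    ∫ p, leadingVariation α γ (waveDir k θ j) p.1 p.2 ∂stripMeasure =
      multiplier α k * ∫ u in (0:ℝ)..1, γ u j * cosWave k θ u := by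
  rw [stripMeasure] at hi ⊢
  rw [integral_prod_symm _ hi, multiplier, ← integral_mul_const]
  congr 1
  ext w
  rw [← intervalIntegral.integral_of_le zero_le_one,
    integral_leadingVariation_waveDir α hγ hP k θ j w]

lemma norm_fCoef_le {γ : ℝ → Rn n} (hγ : Continuous γ) (k : ℤ) (j : Fin n) {B : ℝ}
    (hB : ∀ θ, |∫ u in (0:ℝ)..1, γ u j * cosWave k θ u| ≤ B) : ‖fCoef γ k j‖ ≤ 2 * B := by
  have hc : Continuous fun u => γ u j := (EuclideanSpace.proj (𝕜 := ℝ) j).continuous.comp hγ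
  have hφ := fun θ => continuous_cosWave k θ
  have h1 : Continuous fun u => γ u j * cosWave k 0 u := by have := hφ 0; fun_prop
  have h2 : Continuous fun u => γ u j * cosWave k (Real.pi / 2) u := by
    have := hφ (Real.pi / 2); fun_prop
  have e : fCoef γ k j = ((∫ u in (0:ℝ)..1, γ u j * cosWave k 0 u : ℝ) : ℂ) +
      Complex.I * ((∫ u in (0:ℝ)..1, γ u j * cosWave k (Real.pi / 2) u : ℝ) : ℂ) := by
    rw [← intervalIntegral.integral_ofReal, ← intervalIntegral.integral_ofReal,
      ← intervalIntegral.integral_const_mul, ← intervalIntegral.integral_add, fCoef]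
    · congr 1
      ext u
      rw [show (-2) * (Real.pi : ℂ) * Complex.I * (k : ℂ) * (u : ℂ) =
        ((-(2 * Real.pi * k * u) : ℝ) : ℂ) * Complex.I by push_cast; ring, Complex.exp_mul_I,
        ← Complex.ofReal_cos, ← Complex.ofReal_sin, Real.cos_neg, Real.sin_neg, cosWave, cosWave,
        add_zero, Real.cos_add_pi_div_two]
      push_cast
      ring
    · exact Continuous.intervalIntegrable (by fun_prop) _ _
    · exact Continuous.intervalIntegrable (by fun_prop) _ _
  rw [e]
  refine (norm_add_le _ _).trans ?_
  rw [norm_mul, Complex.norm_I, one_mul, Complex.norm_real, Complex.norm_real, Real.norm_eq_abs,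
    Real.norm_eq_abs]
  linarith [hB 0, hB (Real.pi / 2)]

/-- Fourier coefficients of stationary arc-length curves decay like `|k|^(-α)`. -/
lemma exists_norm_fCoef_le {α lam : ℝ} (hα : α ∈ Ioo (2:ℝ) 3) {γ : ℝ → Rn n}
    (hγ : MemHF ((α + 1) / 2) γ) (hinj : PerInjective γ) (harc : ArcLengthParam γ)
    (hstat : ∀ h : ℝ → Rn n, MemH1 ((α - 1) / 2) h →
      ∃ d : ℝ, HasDirDeriv (oharaER α) γ h d ∧
        d + lam * ∫ u in Ioc (0:ℝ) 1, ⟪deriv γ u, deriv h u⟫ = 0) :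
    ∃ C, 0 ≤ C ∧ ∀ k : ℤ, k ≠ 0 → ∀ j, ‖fCoef γ k j‖ ≤ C * |(k:ℝ)| ^ (-α) := by
  obtain ⟨hd, hc⟩ := hγ.hasDerivAt_continuous (by linarith [hα.1]) harc
  have hγ1 : ContDiff ℝ 1 γ := contDiff_one_iff_deriv.2 ⟨fun u => (hd u).differentiableAt, hc⟩
  obtain ⟨c, hc0, hc1, hcl⟩ := exists_biLipschitz hd hc hγ.1 harc hinj
  obtain ⟨C, hC, hvar⟩ := exists_abs_dirDeriv_sub_le hα hγ1 harc hc0 hc1 hcl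
    (integrable_chordDefect hα hγ hd hc harc)
  obtain ⟨m, hm, hmul⟩ := exists_le_multiplier hα
  have hα0 : 0 < α := by linarith [hα.1]
  refine ⟨2 * ((C + |lam|) * (2 * Real.pi) / (α * m)), by positivity, fun k hk j => ?_⟩
  have hk1 : 1 ≤ |(k:ℝ)| := by exact_mod_cast Int.one_le_abs hk
  have hkp : 0 < |(k:ℝ)| := by linarith
  rw [mul_assoc]
  refine norm_fCoef_le hγ.2.1 k j fun θ => ?_
  obtain ⟨d, hdir, hd0⟩ := hstat _ (memH1_waveDir (by linarith [hα.2]) k θ j)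
  obtain ⟨hi, hest⟩ := hvar (waveDir k θ j) _ _ (contDiff_waveDir k θ j)
    (norm_deriv_waveDir_le k θ j) (norm_deriv_waveDir_sub_le k θ j)
  have hest := hest d hdir
  rw [integral_strip_leadingVariation_waveDir hγ1 hγ.1 k θ j hi] at hest
  set M := ∫ u in (0:ℝ)..1, γ u j * cosWave k θ u
  have hlen : |∫ u in Ioc (0:ℝ) 1, ⟪deriv γ u, deriv (waveDir k θ j) u⟫| ≤
      2 * Real.pi * |(k:ℝ)| := by
    rw [← intervalIntegral.integral_of_le zero_le_one, ← Real.norm_eq_abs]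
    refine (intervalIntegral.norm_integral_le_of_norm_le_const fun u _ => ?_).trans_eq
      (by rw [sub_zero, abs_one, mul_one])
    refine (norm_inner_le_norm _ _).trans ?_
    rw [harc u, one_mul]
    exact norm_deriv_waveDir_le k θ j u
  have hdle : |d| ≤ |lam| * (2 * Real.pi * |(k:ℝ)|) := by
    rw [eq_neg_of_add_eq_zero_left hd0, abs_neg, abs_mul]
    gcongr
  have hmulk : m * |(k:ℝ)| ^ (α + 1) ≤ multiplier α k := by
    have := hmul _ hk1
    rcases abs_choice (k:ℝ) with h | h
    · rwa [h] at this ⊢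
    · rw [h] at this ⊢
      rwa [multiplier_neg] at this
  have hmain : α * (m * |(k:ℝ)| ^ (α + 1)) * |M| ≤ (C + |lam|) * (2 * Real.pi * |(k:ℝ)|) := by
    calc α * (m * |(k:ℝ)| ^ (α + 1)) * |M| ≤ α * multiplier α k * |M| := by gcongr
      _ = |α * (multiplier α k * M)| := by
        rw [abs_mul, abs_mul, abs_of_pos hα0, abs_of_nonneg (multiplier_nonneg α k), mul_assoc]
      _ = |d - (d - α * (multiplier α k * M))| := by rw [sub_sub_cancel]
      _ ≤ |d| + |d - α * (multiplier α k * M)| := abs_sub _ _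
      _ ≤ _ := by linarith
  rw [Real.rpow_neg hkp.le, ← div_eq_mul_inv, div_div, le_div_iff₀ (by positivity)]
  rw [Real.rpow_add_one hkp.ne'] at hmain
  refine le_of_mul_le_mul_right ?_ hkp
  linarith

lemma memHF_of_norm_fCoef_le {α : ℝ} {γ : ℝ → Rn n} (hP : Function.Periodic γ 1)
    (hc : Continuous γ) {C : ℝ}
    (hdec : ∀ k : ℤ, k ≠ 0 → ∀ j, ‖fCoef γ k j‖ ≤ C * |(k:ℝ)| ^ (-α)) {s : ℝ} (hs0 : 0 ≤ s)
    (hs : s < α - 1 / 2) : MemHF s γ := by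
  refine ⟨hP, hc, summable_of_le_abs_rpow (b := 2 * α - 2 * s) (C := 2 ^ s * (n * C ^ 2))
    (by linarith) (fun k => by positivity) fun k hk => ?_⟩
  have hkp : 0 < |(k:ℝ)| := abs_pos.2 (Int.cast_ne_zero.2 hk)
  have hsum : ∑ j, ‖fCoef γ k j‖ ^ 2 ≤ n * (C ^ 2 * |(k:ℝ)| ^ (-(2 * α))) := by
    have : ∀ j ∈ Finset.univ, ‖fCoef γ k j‖ ^ 2 ≤ C ^ 2 * |(k:ℝ)| ^ (-(2 * α)) := fun j _ => by
      refine (pow_le_pow_left₀ (norm_nonneg _) (hdec k hk j) 2).trans_eq ?_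
      rw [mul_pow, ← Real.rpow_mul_natCast hkp.le]
      congr 2
      push_cast
      ring
    simpa using Finset.sum_le_sum this
  calc (1 + (k:ℝ) ^ 2) ^ s * ∑ j, ‖fCoef γ k j‖ ^ 2
      ≤ 2 ^ s * |(k:ℝ)| ^ (2 * s) * (n * (C ^ 2 * |(k:ℝ)| ^ (-(2 * α)))) := by
        gcongr
        exact one_add_sq_rpow_le hk hs0
    _ = 2 ^ s * (n * C ^ 2) * (|(k:ℝ)| ^ (2 * s) * |(k:ℝ)| ^ (-(2 * α))) := by ring
    _ = _ := by
      rw [← Real.rpow_add hkp]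
      congr 2
      ring

lemma MemHF.mono {s t : ℝ} {γ : ℝ → Rn n} (h : MemHF t γ) (hst : s ≤ t) : MemHF s γ :=
  ⟨h.1, h.2.1, h.2.2.of_nonneg_of_le (fun k => by positivity) fun k => by
    have : 1 ≤ 1 + (k:ℝ) ^ 2 := by linarith [sq_nonneg (k:ℝ)]
    gcongr⟩

/-- A stationary point `γ ∈ H^{(α+1)/2,2}` of `E^α + λL` (injective,
arc-length) belongs to `H^{α−1/2−ε,2}` for every `ε > 0`. -/
theorem statement16 {n : ℕ} (hn : 2 ≤ n) {α lam : ℝ} (hα : α ∈ Ioo (2:ℝ) 3) (hlam : 0 < lam)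
    {γ : ℝ → Rn n} (hγ : MemHF ((α + 1) / 2) γ) (hinj : PerInjective γ)
    (harc : ArcLengthParam γ)
    (hstat : ∀ h : ℝ → Rn n, MemH1 ((α - 1) / 2) h →
      ∃ d : ℝ, HasDirDeriv (oharaER α) γ h d ∧
        d + lam * ∫ u in Ioc (0:ℝ) 1, ⟪deriv γ u, deriv h u⟫ = 0) :
    ∀ ε > (0:ℝ), MemHF (α - 1/2 - ε) γ := by
  intro ε hε
  obtain ⟨C, -, hdec⟩ := exists_norm_fCoef_le hα hγ hinj harc hstat
  have hα2 := hα.1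
  exact (memHF_of_norm_fCoef_le hγ.1 hγ.2.1 hdec (s := max 0 (α - 1 / 2 - ε)) (le_max_left _ _)
    (max_lt (by linarith) (by linarith))).mono (le_max_right _ _)

end
end

section
/- Let s ∈ (1/2,1), c > 0, M > 0 and n ≥ 1. There exists a constant C = C(s,c,M,n) < ∞ such that for all f, g ∈ H^{s,2}(ℝ/ℤ,ℝⁿ) with |f(u)| ≥ c and |g(u)| ≥ c for all u and ‖f‖_{H^{s,2}} ≤ M, ‖g‖_{H^{s,2}} ≤ M, the scalar functions |f|, |g| belong to H^{s,2}(ℝ/ℤ,ℝ) and ‖ |f| − |g| ‖_{H^{s,2}} ≤ C·‖f − g‖_{H^{s,2}}. -/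
open MeasureTheory Filter Set
open scoped RealInnerProductSpace ENNReal Topology

noncomputable section

variable {n : ℕ}

section HsNormLipschitz

variable {E : Type*} [NormedAddCommGroup E]

theorem Function.Periodic.setLIntegral_Ioc_add_eq {F : ℝ → ℝ≥0∞} (hF : Function.Periodic F 1)
    (a b : ℝ) : ∫⁻ u in Ioc a (a + 1), F u = ∫⁻ u in Ioc b (b + 1), F u := by
  have : VAddInvariantMeasure (AddSubgroup.zmultiples (1 : ℝ)) ℝ volume :=
    ⟨fun c s _ => measure_preimage_add _ _ _⟩
  exact (isAddFundamentalDomain_Ioc one_pos a).setLIntegral_eq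
    (isAddFundamentalDomain_Ioc one_pos b) F hF.map_vadd_zmultiples

/-- The inner integral of the squared Gagliardo seminorm is periodic, so the outer integral may
be taken over any period. -/
theorem gagliardoSq_eq_setLIntegral_Ioc {s : ℝ} {h : ℝ → E} (hper : Function.Periodic h 1)
    (a : ℝ) :
    gagliardoSq s h = ∫⁻ u in Ioc a (a + 1), ∫⁻ w in Ioo (-(1:ℝ)/2) (1/2),
      ENNReal.ofReal (‖h (u + w) - h u‖ ^ 2 / |w| ^ (1 + 2 * s)) := by
  have hF : Function.Periodic (fun u => ∫⁻ w in Ioo (-(1:ℝ)/2) (1/2),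
      ENNReal.ofReal (‖h (u + w) - h u‖ ^ 2 / |w| ^ (1 + 2 * s))) 1 := by
    intro u
    simp only [hper u, show ∀ w, h (u + 1 + w) = h (u + w) from fun w => by
      rw [add_right_comm, hper]]
  have := hF.setLIntegral_Ioc_add_eq 0 a
  rw [zero_add] at this
  exact this

theorem lintegral_lintegral_norm_sub_sq_le {s : ℝ} (hs : 0 < s) {h : ℝ → E}
    (hper : Function.Periodic h 1) {u r : ℝ} (hr : 0 < r) (hr' : r ≤ 1 / 2) :
    ∫⁻ x in Ioc u (u + r), ∫⁻ y in Ioc u (u + r), ENNReal.ofReal (‖h x - h y‖ ^ 2) ≤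
      ENNReal.ofReal (r ^ (1 + 2 * s)) * gagliardoSq s h := by
  rw [gagliardoSq_eq_setLIntegral_Ioc hper u,
    ← lintegral_const_mul' _ _ ENNReal.ofReal_ne_top]
  refine (setLIntegral_mono' measurableSet_Ioc fun x hx => ?_).trans
    (lintegral_mono_set (Ioc_subset_Ioc_right (by linarith)))
  rw [← lintegral_const_mul' _ _ ENNReal.ofReal_ne_top, ← lintegral_indicator measurableSet_Ioc,
    ← lintegral_indicator measurableSet_Ioo, ← lintegral_add_left_eq_self _ x]
  refine lintegral_mono fun w => ?_
  refine indicator_apply_le' (fun hw => ?_) (fun _ => zero_le)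
  have hw' : |w| < r := abs_lt.2 ⟨by linarith [hx.2, hw.1], by linarith [hx.1, hw.2]⟩
  have hw2 := abs_lt.1 hw'
  rw [indicator_of_mem (show w ∈ Ioo (-(1:ℝ)/2) (1/2) from ⟨by linarith, by linarith⟩),
    ← ENNReal.ofReal_mul (by positivity), norm_sub_rev]
  refine ENNReal.ofReal_le_ofReal ?_
  rcases eq_or_ne w 0 with rfl | h0
  · simp
  · rw [← mul_div_assoc, le_div_iff₀ (by positivity), mul_comm]
    gcongr

/-- Comparison of the integrals of `‖h‖` over two nested intervals, through the seminorm. -/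
theorem mul_lintegral_enorm_le {s : ℝ} (hs : 0 < s) {h : ℝ → E}
    (hper : Function.Periodic h 1) (hm : AEStronglyMeasurable h (volume : Measure ℝ))
    {N : ℝ} (hN : 0 < N) (hG : gagliardoSq s h ≤ ENNReal.ofReal (N ^ 2))
    {u r : ℝ} (hr : 0 < r) (hr' : r ≤ 1 / 2) :
    ENNReal.ofReal r * ∫⁻ x in Ioc u (u + r / 2), ‖h x‖ₑ ≤
      ENNReal.ofReal (r / 2) * (∫⁻ y in Ioc u (u + r), ‖h y‖ₑ) +
        ENNReal.ofReal (2 * (r ^ 2 * (r ^ (s - 1 / 2) * N))) := by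
  set lam : ℝ := r ^ (s - 1 / 2) * N with hlam
  have hlam0 : 0 < lam := by positivity
  have hsub : Ioc u (u + r / 2) ⊆ Ioc u (u + r) := Ioc_subset_Ioc_right (by linarith)
  have hpt : ∀ x y, ‖h x‖ₑ ≤ ‖h y‖ₑ + (ENNReal.ofReal lam +
      ENNReal.ofReal lam⁻¹ * ENNReal.ofReal (‖h x - h y‖ ^ 2)) := by
    intro x y
    rw [← ofReal_norm, ← ofReal_norm, ← ENNReal.ofReal_mul (by positivity),
      ← ENNReal.ofReal_add (by positivity) (by positivity),
      ← ENNReal.ofReal_add (by positivity) (by positivity)]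
    refine ENNReal.ofReal_le_ofReal ?_
    have h1 : ‖h x‖ ≤ ‖h y‖ + ‖h x - h y‖ := norm_le_norm_add_norm_sub' _ _
    have h2 : ‖h x - h y‖ ≤ lam + lam⁻¹ * ‖h x - h y‖ ^ 2 := by
      rw [inv_mul_eq_div, ← sub_le_iff_le_add', le_div_iff₀ hlam0]
      nlinarith [sq_nonneg (‖h x - h y‖ - lam), sq_nonneg ‖h x - h y‖, sq_nonneg lam]
    linarith
  have hvol : ∀ a : ℝ, volume (Ioc u (u + a)) = ENNReal.ofReal a := fun a => by simp
  calc ENNReal.ofReal r * ∫⁻ x in Ioc u (u + r / 2), ‖h x‖ₑ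
      = ∫⁻ x in Ioc u (u + r / 2), ∫⁻ _ in Ioc u (u + r), ‖h x‖ₑ := by
        simp only [setLIntegral_const, hvol]
        rw [lintegral_mul_const' _ _ ENNReal.ofReal_ne_top, mul_comm]
    _ ≤ ∫⁻ x in Ioc u (u + r / 2), ∫⁻ y in Ioc u (u + r), (‖h y‖ₑ + (ENNReal.ofReal lam +
          ENNReal.ofReal lam⁻¹ * ENNReal.ofReal (‖h x - h y‖ ^ 2))) :=
        lintegral_mono fun x => lintegral_mono fun y => hpt x y
    _ = ENNReal.ofReal (r / 2) * (∫⁻ y in Ioc u (u + r), ‖h y‖ₑ) +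
          (ENNReal.ofReal r * ENNReal.ofReal lam * ENNReal.ofReal (r / 2) +
          ENNReal.ofReal lam⁻¹ * ∫⁻ x in Ioc u (u + r / 2), ∫⁻ y in Ioc u (u + r),
            ENNReal.ofReal (‖h x - h y‖ ^ 2)) := by
        simp only [lintegral_add_left' hm.enorm.restrict, lintegral_add_left measurable_const,
          setLIntegral_const, hvol, lintegral_const_mul' _ _ ENNReal.ofReal_ne_top]
        ring
    _ ≤ ENNReal.ofReal (r / 2) * (∫⁻ y in Ioc u (u + r), ‖h y‖ₑ) +
          (ENNReal.ofReal r * ENNReal.ofReal lam * ENNReal.ofReal r +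
          ENNReal.ofReal lam⁻¹ * (ENNReal.ofReal (r ^ (1 + 2 * s)) * ENNReal.ofReal (N ^ 2))) := by
        gcongr
        · linarith
        · exact (lintegral_mono_set hsub).trans
            ((lintegral_lintegral_norm_sub_sq_le hs hper hr hr').trans (by gcongr))
    _ = _ := by
        rw [← ENNReal.ofReal_mul (by positivity), ← ENNReal.ofReal_mul (by positivity),
          ← ENNReal.ofReal_mul (by positivity), ← ENNReal.ofReal_mul (by positivity),
          ← ENNReal.ofReal_add (by positivity) (by positivity)]
        congr 2
        have : r ^ (1 + 2 * s) = r ^ 2 * (r ^ (s - 1 / 2)) ^ 2 := by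
          rw [← Real.rpow_natCast, ← Real.rpow_natCast, ← Real.rpow_mul hr.le,
            ← Real.rpow_add hr]
          congr 1; push_cast; ring
        rw [this, hlam]
        have : r ^ (s - 1 / 2) ≠ 0 := by positivity
        field_simp
        ring

theorem MemL2per.memLp {h : ℝ → E} (hh : MemL2per h) :
    MemLp h 2 (volume.restrict (Ioc (0:ℝ) 1)) :=
  (memLp_two_iff_integrable_sq_norm hh.2.1.restrict).2 hh.2.2

theorem MemL2per.lintegral_enorm_le {h : ℝ → E} (hh : MemL2per h) {N : ℝ} (hN : 0 < N)
    (hL : ∫ u in Ioc (0:ℝ) 1, ‖h u‖ ^ 2 ≤ N ^ 2) (a : ℝ) :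
    ∫⁻ x in Ioc a (a + 1), ‖h x‖ₑ ≤ ENNReal.ofReal N := by
  have hper : Function.Periodic (fun x => ‖h x‖ₑ) 1 := fun x => by simp only [hh.1 x]
  have hi : Integrable h (volume.restrict (Ioc (0:ℝ) 1)) := hh.memLp.integrable one_le_two
  rw [hper.setLIntegral_Ioc_add_eq a 0, zero_add, ← ofReal_integral_norm_eq_lintegral_enorm hi]
  refine ENNReal.ofReal_le_ofReal ?_
  have hint : IntegrableOn (fun u => (N / 2 + ‖h u‖ ^ 2 / (2 * N))) (Ioc (0:ℝ) 1) :=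
    (integrable_const _).add (hh.2.2.div_const _)
  calc ∫ u in Ioc (0:ℝ) 1, ‖h u‖ ≤ ∫ u in Ioc (0:ℝ) 1, (N / 2 + ‖h u‖ ^ 2 / (2 * N)) := by
        refine integral_mono hi.norm hint fun u => ?_
        have : N / 2 + ‖h u‖ ^ 2 / (2 * N) - ‖h u‖ = (N - ‖h u‖) ^ 2 / (2 * N) := by
          field_simp; ring
        have h2 : 0 ≤ (N - ‖h u‖) ^ 2 / (2 * N) := by positivity
        linarith
    _ = N / 2 + (∫ u in Ioc (0:ℝ) 1, ‖h u‖ ^ 2) / (2 * N) := by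
        rw [integral_add (integrable_const _) (hh.2.2.div_const _)]
        simp [integral_div]
    _ ≤ N / 2 + N ^ 2 / (2 * N) := by gcongr
    _ = N := by field_simp; ring

/-- The constant of the Sobolev embedding `H^{s,2} ⊂ L^∞` for `s > 1/2`. -/
def sobolevConst (s : ℝ) : ℝ := 2 + 4 / (1 - (1 / 2 : ℝ) ^ (s - 1 / 2))

theorem half_rpow_lt_one {s : ℝ} (hs : 1 / 2 < s) : (1 / 2 : ℝ) ^ (s - 1 / 2) < 1 :=
  Real.rpow_lt_one (by norm_num) (by norm_num) (by linarith)

theorem sobolevConst_pos {s : ℝ} (hs : 1 / 2 < s) : 0 < sobolevConst s := by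
  have := sub_pos.2 (half_rpow_lt_one hs)
  unfold sobolevConst
  positivity

/-- Averages of `‖h‖` over dyadic intervals are bounded by the `H^{s,2}` norm. -/
theorem lintegral_enorm_dyadic_le {s : ℝ} (hs : 1 / 2 < s) {h : ℝ → E} (hh : MemL2per h)
    {N : ℝ} (hN : 0 < N) (hG : gagliardoSq s h ≤ ENNReal.ofReal (N ^ 2))
    (hL : ∫ u in Ioc (0:ℝ) 1, ‖h u‖ ^ 2 ≤ N ^ 2) (u : ℝ) (k : ℕ) :
    ∫⁻ x in Ioc u (u + (1 / 2) ^ (k + 1)), ‖h x‖ₑ ≤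
      ENNReal.ofReal ((1 / 2) ^ (k + 1) * (sobolevConst s * N)) := by
  set q : ℝ := (1 / 2 : ℝ) ^ (s - 1 / 2) with hq
  have hq0 : 0 < q := by positivity
  have hq1 : 0 < 1 - q := sub_pos.2 (half_rpow_lt_one hs)
  suffices H : ∫⁻ x in Ioc u (u + (1 / 2) ^ (k + 1)), ‖h x‖ₑ ≤
      ENNReal.ofReal ((1 / 2) ^ (k + 1) * (2 * N + 4 * N * (1 - q ^ k) / (1 - q))) by
    refine H.trans (ENNReal.ofReal_le_ofReal ?_)
    gcongr
    rw [sobolevConst, ← hq, add_mul, div_mul_eq_mul_div]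
    have : 4 * N * (1 - q ^ k) ≤ 4 * N := by
      have : 0 < N * q ^ k := by positivity
      linarith
    gcongr
  induction k with
  | zero =>
    have := (lintegral_mono_set (Ioc_subset_Ioc_right (by norm_num :
      u + (1 / 2 : ℝ) ^ (0 + 1) ≤ u + 1))).trans (hh.lintegral_enorm_le hN hL u)
    refine this.trans (ENNReal.ofReal_le_ofReal ?_)
    simp
  | succ k ih =>
    set r : ℝ := (1 / 2 : ℝ) ^ (k + 1) with hr
    have hr0 : 0 < r := by positivity
    have hr1 : r ≤ 1 / 2 := by
      rw [hr, pow_succ]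
      have : (1 / 2 : ℝ) ^ k ≤ 1 := pow_le_one₀ (by norm_num) (by norm_num)
      linarith
    have hr2 : (1 / 2 : ℝ) ^ (k + 1 + 1) = r / 2 := by rw [hr, pow_succ _ (k + 1)]; ring
    have hrq : r ^ (s - 1 / 2) ≤ q ^ k := by
      rw [hr, hq, ← Real.rpow_natCast, ← Real.rpow_natCast, ← Real.rpow_mul (by norm_num),
        ← Real.rpow_mul (by norm_num)]
      refine Real.rpow_le_rpow_of_exponent_ge (by norm_num) (by norm_num) ?_
      push_cast
      nlinarith
    have hqk : 0 ≤ 1 - q ^ k := sub_nonneg.2 (pow_le_one₀ hq0.le (by linarith))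
    rw [hr2]
    have hstep := mul_lintegral_enorm_le (by linarith) hh.1 hh.2.1 hN hG (u := u) hr0 hr1
    rw [← ENNReal.mul_le_mul_iff_right (a := ENNReal.ofReal r) (by simpa using hr0)
      ENNReal.ofReal_ne_top]
    refine hstep.trans ?_
    calc _ ≤ ENNReal.ofReal (r / 2) *
            ENNReal.ofReal (r * (2 * N + 4 * N * (1 - q ^ k) / (1 - q))) +
          ENNReal.ofReal (2 * (r ^ 2 * (q ^ k * N))) := by gcongr
      _ = _ := by
        rw [← ENNReal.ofReal_mul (by positivity), ← ENNReal.ofReal_mul (by positivity),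
          ← ENNReal.ofReal_add (by positivity) (by positivity)]
        congr 1
        field_simp
        ring

/-- Sobolev embedding: functions in `H^{s,2}(ℝ/ℤ)`, `s > 1/2`, are essentially bounded. -/
theorem MemHs0.ae_norm_le {s : ℝ} (hs : 1 / 2 < s) {h : ℝ → E} (hh : MemHs0 s h) :
    ∀ᵐ u ∂(volume.restrict (Ioc (0:ℝ) 1)), ‖h u‖ ≤ sobolevConst s * Hs0Norm s h := by
  have hfin : ∫⁻ x, (Ioc (0:ℝ) 1).indicator (fun x => ‖h x‖ₑ) x ≠ ⊤ := by
    rw [lintegral_indicator measurableSet_Ioc]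
    exact (hh.1.memLp.integrable one_le_two).2.ne
  have hmeas : AEMeasurable ((Ioc (0:ℝ) 1).indicator (fun x => ‖h x‖ₑ)) volume :=
    hh.1.2.1.enorm.indicator measurableSet_Ioc
  rw [← restrict_Ioo_eq_restrict_Ioc, ae_restrict_iff' measurableSet_Ioo]
  filter_upwards [(IsUnifLocDoublingMeasure.vitaliFamily
    (volume : Measure ℝ) 1).ae_tendsto_lintegral_div hmeas hfin] with u hu hu01
  have hC := sobolevConst_pos hs
  have hpow : Tendsto (fun k : ℕ => (1 / 2 : ℝ) ^ (k + 1)) atTop (𝓝 0) :=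
    (tendsto_pow_atTop_nhds_zero_of_lt_one (by norm_num) (by norm_num)).comp
      (tendsto_add_atTop_nat 1)
  have hseq : Tendsto (fun k : ℕ => u + (1 / 2 : ℝ) ^ (k + 1)) atTop (𝓝[>] u) := by
    refine tendsto_nhdsWithin_iff.2 ⟨by simpa using hpow.const_add u, .of_forall fun k => ?_⟩
    simp
  have hlim := hu.comp ((Real.tendsto_Icc_vitaliFamily_right u).comp hseq)
  rw [indicator_of_mem (Ioo_subset_Ioc_self hu01)] at hlim
  have key : ∀ N : ℝ, Hs0Norm s h < N → ‖h u‖ ≤ sobolevConst s * N := by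
    intro N hNlt
    have hA := Real.sqrt_nonneg (∫ u in Ioc (0:ℝ) 1, ‖h u‖ ^ 2)
    have hB := Real.sqrt_nonneg (gagliardoSq s h).toReal
    unfold Hs0Norm at hNlt
    have hN : 0 < N := by linarith
    have hL : ∫ u in Ioc (0:ℝ) 1, ‖h u‖ ^ 2 ≤ N ^ 2 :=
      (Real.sqrt_le_left hN.le).1 (by linarith)
    have hG : gagliardoSq s h ≤ ENNReal.ofReal (N ^ 2) :=
      (ENNReal.le_ofReal_iff_toReal_le hh.2.ne (by positivity)).2
        ((Real.sqrt_le_left hN.le).1 (by linarith))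
    have hle : ‖h u‖ₑ ≤ ENNReal.ofReal (sobolevConst s * N) := by
      refine le_of_tendsto hlim (.of_forall fun k => ?_)
      simp only [Function.comp_apply, Real.volume_Icc, add_sub_cancel_left]
      refine ENNReal.div_le_of_le_mul ?_
      rw [mul_comm, ← ENNReal.ofReal_mul (by positivity)]
      refine le_trans ?_ (lintegral_enorm_dyadic_le hs hh.1 hN hG hL u k)
      rw [restrict_Ioc_eq_restrict_Icc]
      exact lintegral_mono fun x => indicator_le_self _ _ x
    rwa [← ofReal_norm, ENNReal.ofReal_le_ofReal_iff (by positivity)] at hle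
  refine le_of_forall_gt_imp_ge_of_dense fun a ha => ?_
  have := key (a / sobolevConst s) (by rwa [lt_div_iff₀ hC, mul_comm])
  rwa [mul_div_cancel₀ _ hC.ne'] at this

variable {F G H : Type*} [NormedAddCommGroup F] [NormedAddCommGroup G] [NormedAddCommGroup H]

theorem aemeasurable_gagliardo_integrand {h : ℝ → E}
    (hm : AEStronglyMeasurable h (volume : Measure ℝ)) (s u : ℝ) :
    AEMeasurable (fun w => ENNReal.ofReal (‖h (u + w) - h u‖ ^ 2 / |w| ^ (1 + 2 * s)))
      (volume : Measure ℝ) := by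
  have h1 : AEStronglyMeasurable (fun w => h (u + w)) (volume : Measure ℝ) :=
    hm.comp_quasiMeasurePreserving (measurePreserving_add_left volume u).quasiMeasurePreserving
  have h2 : AEMeasurable (fun w => ‖h (u + w) - h u‖) (volume : Measure ℝ) :=
    (h1.sub aestronglyMeasurable_const).norm.aemeasurable
  exact ((h2.pow_const 2).div (by fun_prop)).ennreal_ofReal

theorem aemeasurable_gagliardo_inner {h : ℝ → E}
    (hm : AEStronglyMeasurable h (volume : Measure ℝ)) (s : ℝ) (A : Set ℝ) :
    AEMeasurable (fun u => ∫⁻ w in A,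
      ENNReal.ofReal (‖h (u + w) - h u‖ ^ 2 / |w| ^ (1 + 2 * s))) (volume : Measure ℝ) := by
  have h1 : AEStronglyMeasurable (fun p : ℝ × ℝ => h (p.1 + p.2))
      ((volume : Measure ℝ).prod volume) :=
    hm.comp_quasiMeasurePreserving (Measure.quasiMeasurePreserving_snd.comp
      (measurePreserving_prod_add volume volume).quasiMeasurePreserving)
  have h2 : AEStronglyMeasurable (fun p : ℝ × ℝ => h p.1) ((volume : Measure ℝ).prod volume) :=
    hm.comp_fst
  have h3 : AEMeasurable (fun p : ℝ × ℝ => ENNReal.ofReal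
      (‖h (p.1 + p.2) - h p.1‖ ^ 2 / |p.2| ^ (1 + 2 * s))) ((volume : Measure ℝ).prod volume) :=
    (((h1.sub h2).norm.aemeasurable.pow_const 2).div (by fun_prop)).ennreal_ofReal
  refine AEMeasurable.lintegral_prod_right' (f := fun p : ℝ × ℝ => ENNReal.ofReal
      (‖h (p.1 + p.2) - h p.1‖ ^ 2 / |p.2| ^ (1 + 2 * s))) (h3.mono_ac ?_)
  exact Measure.AbsolutelyContinuous.rfl.prod Measure.absolutelyContinuous_restrict

theorem gagliardoSq_le_add {s : ℝ} {d : ℝ → E} {h : ℝ → F} {f : ℝ → G} {g : ℝ → H}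
    (hh : AEStronglyMeasurable h (volume : Measure ℝ))
    (hf : AEStronglyMeasurable f (volume : Measure ℝ))
    {a b : ℝ} (ha : 0 ≤ a) (hb : 0 ≤ b)
    (hle : ∀ᵐ u ∂(volume.restrict (Ioc (0:ℝ) 1)), ∀ w, ‖d (u + w) - d u‖ ^ 2 ≤
      a * ‖h (u + w) - h u‖ ^ 2 + (b * ‖f (u + w) - f u‖ ^ 2 + b * ‖g (u + w) - g u‖ ^ 2)) :
    gagliardoSq s d ≤ ENNReal.ofReal a * gagliardoSq s h +
      (ENNReal.ofReal b * gagliardoSq s f + ENNReal.ofReal b * gagliardoSq s g) := by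
  unfold gagliardoSq
  have mh := (aemeasurable_gagliardo_inner hh s (Ioo (-(1:ℝ)/2) (1/2))).restrict
    (s := Ioc (0:ℝ) 1)
  have mf := (aemeasurable_gagliardo_inner hf s (Ioo (-(1:ℝ)/2) (1/2))).restrict
    (s := Ioc (0:ℝ) 1)
  rw [← lintegral_const_mul' _ _ ENNReal.ofReal_ne_top,
    ← lintegral_const_mul' _ _ ENNReal.ofReal_ne_top,
    ← lintegral_const_mul' _ _ ENNReal.ofReal_ne_top,
    ← lintegral_add_left' (mf.const_mul _), ← lintegral_add_left' (mh.const_mul _)]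
  refine lintegral_mono_ae (hle.mono fun u hu => ?_)
  rw [← lintegral_const_mul' _ _ ENNReal.ofReal_ne_top,
    ← lintegral_const_mul' _ _ ENNReal.ofReal_ne_top,
    ← lintegral_const_mul' _ _ ENNReal.ofReal_ne_top,
    ← lintegral_add_left' ((aemeasurable_gagliardo_integrand hf s u).restrict.const_mul _),
    ← lintegral_add_left' ((aemeasurable_gagliardo_integrand hh s u).restrict.const_mul _)]
  refine lintegral_mono fun w => ?_
  rw [← ENNReal.ofReal_mul ha, ← ENNReal.ofReal_mul hb, ← ENNReal.ofReal_mul hb,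
    ← ENNReal.ofReal_add (by positivity) (by positivity),
    ← ENNReal.ofReal_add (by positivity) (by positivity), ← mul_div_assoc, ← mul_div_assoc,
    ← mul_div_assoc, ← add_div, ← add_div]
  exact ENNReal.ofReal_le_ofReal (div_le_div_of_nonneg_right (hu w) (by positivity))

theorem MemHs0.sub {s : ℝ} {f g : ℝ → E} (hf : MemHs0 s f) (hg : MemHs0 s g) :
    MemHs0 s (f - g) := by
  refine ⟨⟨hf.1.1.sub hg.1.1, hf.1.2.1.sub hg.1.2.1, ?_⟩, ?_⟩
  · exact (memLp_two_iff_integrable_sq_norm (hf.1.2.1.sub hg.1.2.1).restrict).1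
      (hf.1.memLp.sub hg.1.memLp)
  · refine (gagliardoSq_le_add (a := 0) (b := 2) (h := f) (f := f) (g := g) hf.1.2.1 hf.1.2.1
      le_rfl zero_le_two (.of_forall fun u w => ?_)).trans_lt ?_
    · have h1 : ‖(f - g) (u + w) - (f - g) u‖ ≤ ‖f (u + w) - f u‖ + ‖g (u + w) - g u‖ := by
        simp only [Pi.sub_apply]
        rw [sub_sub_sub_comm]
        exact norm_sub_le _ _
      nlinarith [norm_nonneg ((f - g) (u + w) - (f - g) u),
        sq_nonneg (‖f (u + w) - f u‖ - ‖g (u + w) - g u‖)]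
    · simp only [ENNReal.ofReal_zero, zero_mul, zero_add]
      exact ENNReal.add_lt_top.2 ⟨ENNReal.mul_lt_top ENNReal.ofReal_lt_top hf.2,
        ENNReal.mul_lt_top ENNReal.ofReal_lt_top hg.2⟩

theorem MemHs0.norm {s : ℝ} {f : ℝ → E} (hf : MemHs0 s f) : MemHs0 s (fun u => ‖f u‖) := by
  refine ⟨⟨fun u => by simp only [hf.1.1 u], hf.1.2.1.norm, by simpa using hf.1.2.2⟩, ?_⟩
  refine lt_of_le_of_lt (lintegral_mono fun u => lintegral_mono fun w =>
    ENNReal.ofReal_le_ofReal ?_) hf.2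
  gcongr
  exact abs_norm_sub_norm_le _ _

/-- Increments of `(x, y) ↦ ‖x‖ - ‖y‖` away from the origin. -/
theorem abs_norm_sub_norm_sub_le {V : Type*} [NormedAddCommGroup V] [InnerProductSpace ℝ V]
    {c : ℝ} (hc : 0 < c) {x y x' y' : V} (hx : c ≤ ‖x‖) (hy : c ≤ ‖y‖) (hx' : c ≤ ‖x'‖)
    (hy' : c ≤ ‖y'‖) :
    |(‖x'‖ - ‖y'‖) - (‖x‖ - ‖y‖)| ≤
      ‖(x' - y') - (x - y)‖ + ‖x - y‖ / c * (‖x' - x‖ + ‖y' - y‖) := by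
  have key : ∀ a b : V, 0 < ‖a‖ + ‖b‖ →
      ‖a‖ - ‖b‖ = ⟪a - b, (‖a‖ + ‖b‖)⁻¹ • (a + b)⟫ := by
    intro a b hab
    rw [real_inner_smul_right, inner_sub_left, inner_add_right, inner_add_right,
      real_inner_self_eq_norm_sq, real_inner_self_eq_norm_sq, real_inner_comm a b, inv_mul_eq_div,
      eq_div_iff hab.ne']
    ring
  set T := ‖x‖ + ‖y‖
  set T' := ‖x'‖ + ‖y'‖
  have hT : 2 * c ≤ T := by linarith
  have hT' : 2 * c ≤ T' := by linarith
  have hT0 : 0 < T := by linarith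
  have hT0' : 0 < T' := by linarith
  set p := T⁻¹ • (x + y)
  set p' := T'⁻¹ • (x' + y')
  set δ := ‖x' - x‖ + ‖y' - y‖
  have hp' : ‖p'‖ ≤ 1 := by
    rw [norm_smul, norm_inv, Real.norm_of_nonneg hT0'.le, inv_mul_eq_div, div_le_one hT0']
    exact norm_add_le _ _
  have hTT : |T - T'| ≤ δ := by
    have h1 := abs_norm_sub_norm_le x' x
    have h2 := abs_norm_sub_norm_le y' y
    rw [abs_le] at h1 h2 ⊢
    constructor <;> simp only [T, T', δ] <;> linarith
  have hpp : ‖p' - p‖ ≤ δ / c := by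
    have heq : T • (p' - p) = ((x' - x) + (y' - y)) + (T - T') • p' := by
      have e1 : T • p = x + y := smul_inv_smul₀ hT0.ne' _
      have e2 : T' • p' = x' + y' := smul_inv_smul₀ hT0'.ne' _
      rw [smul_sub, sub_smul, e1, e2]
      abel
    have h1 : T * ‖p' - p‖ ≤ 2 * δ := by
      rw [← Real.norm_of_nonneg hT0.le, ← norm_smul, heq]
      refine (norm_add_le _ _).trans ?_
      rw [norm_smul, Real.norm_eq_abs]
      have h2 : ‖(x' - x) + (y' - y)‖ ≤ δ := norm_add_le _ _
      have h3 : |T - T'| * ‖p'‖ ≤ δ * 1 := by gcongr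
      linarith
    rw [le_div_iff₀ hc]
    nlinarith [norm_nonneg (p' - p)]
  have hD : (‖x'‖ - ‖y'‖) - (‖x‖ - ‖y‖) = ⟪(x' - y') - (x - y), p'⟫ + ⟪x - y, p' - p⟫ := by
    rw [key x' y' hT0', key x y hT0, inner_sub_left (x' - y'), inner_sub_right]
    ring
  rw [hD]
  calc _ ≤ ‖(x' - y') - (x - y)‖ * ‖p'‖ + ‖x - y‖ * ‖p' - p‖ :=
        (abs_add_le _ _).trans
          (add_le_add (abs_real_inner_le_norm _ _) (abs_real_inner_le_norm _ _))
    _ ≤ ‖(x' - y') - (x - y)‖ * 1 + ‖x - y‖ * (δ / c) := by gcongr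
    _ = _ := by ring

theorem gagliardoSq_le_sq {s : ℝ} {h : ℝ → E} (hh : MemHs0 s h) {N : ℝ} (hN : Hs0Norm s h ≤ N) :
    gagliardoSq s h ≤ ENNReal.ofReal (N ^ 2) := by
  have hA := Real.sqrt_nonneg (∫ u in Ioc (0:ℝ) 1, ‖h u‖ ^ 2)
  have hB := Real.sqrt_nonneg (gagliardoSq s h).toReal
  unfold Hs0Norm at hN
  exact (ENNReal.le_ofReal_iff_toReal_le hh.2.ne (by positivity)).2
    ((Real.sqrt_le_left (by linarith)).1 (by linarith))

end HsNormLipschitz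

/-- For `s ∈ (1/2,1)`, `c > 0`, `M > 0` there is `C = C(s,c,M,n)` such that
for all `f, g ∈ H^{s,2}(ℝ/ℤ,ℝⁿ)` with `|f|, |g| ≥ c` pointwise and norms at most `M`, the
scalar functions `|f|, |g|` belong to `H^{s,2}(ℝ/ℤ,ℝ)` and
`‖|f| − |g|‖_{H^{s,2}} ≤ C ‖f − g‖_{H^{s,2}}`. -/
theorem statement19 {n : ℕ} (hn : 1 ≤ n) {s c M : ℝ} (hs : s ∈ Ioo (1/2 : ℝ) 1)
    (hc : 0 < c) (hM : 0 < M) :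
    ∃ C : ℝ, ∀ f g : ℝ → Rn n,
      MemHs0 s f → MemHs0 s g →
      (∀ u : ℝ, c ≤ ‖f u‖) → (∀ u : ℝ, c ≤ ‖g u‖) →
      Hs0Norm s f ≤ M → Hs0Norm s g ≤ M →
      MemHs0 s (fun u : ℝ => ‖f u‖) ∧ MemHs0 s (fun u : ℝ => ‖g u‖) ∧
      Hs0Norm s ((fun u : ℝ => ‖f u‖) - fun u : ℝ => ‖g u‖) ≤ C * Hs0Norm s (f - g) := by
  have hs' : 1 / 2 < s := hs.1
  refine ⟨1 + Real.sqrt (3 + 6 * (sobolevConst s * M / c) ^ 2), fun f g hf hg hfc hgc hfM hgM =>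
    ⟨hf.norm, hg.norm, ?_⟩⟩
  have hh : MemHs0 s (f - g) := hf.sub hg
  set N := Hs0Norm s (f - g) with hN
  set K := sobolevConst s * N / c with hK
  have hN0 : 0 ≤ N := add_nonneg (Real.sqrt_nonneg _) (Real.sqrt_nonneg _)
  have hL2 : ∫ u in Ioc (0:ℝ) 1,
      ‖((fun u : ℝ => ‖f u‖) - fun u : ℝ => ‖g u‖) u‖ ^ 2 ≤
        ∫ u in Ioc (0:ℝ) 1, ‖(f - g) u‖ ^ 2 := by
    refine integral_mono_of_nonneg (.of_forall fun u => by positivity) hh.1.2.2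
      (.of_forall fun u => ?_)
    exact pow_le_pow_left₀ (norm_nonneg _) (abs_norm_sub_norm_le _ _) 2
  have hgag : gagliardoSq s ((fun u : ℝ => ‖f u‖) - fun u : ℝ => ‖g u‖) ≤
      ENNReal.ofReal (N ^ 2 * (3 + 6 * (sobolevConst s * M / c) ^ 2)) := by
    refine (gagliardoSq_le_add (a := 3) (b := 3 * K ^ 2) (h := f - g) (f := f) (g := g)
      hh.1.2.1 hf.1.2.1 (by norm_num) (by positivity) ?_).trans ?_
    · filter_upwards [hh.ae_norm_le hs'] with u hu w
      have h1 := abs_norm_sub_norm_sub_le hc (hfc u) (hgc u) (hfc (u + w)) (hgc (u + w))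
      have h2 : ‖f u - g u‖ / c ≤ K := div_le_div_of_nonneg_right hu hc.le
      simp only [Pi.sub_apply, Real.norm_eq_abs]
      set A := ‖f (u + w) - g (u + w) - (f u - g u)‖
      set B := ‖f (u + w) - f u‖
      set D := ‖g (u + w) - g u‖
      have h3 : |(‖f (u + w)‖ - ‖g (u + w)‖) - (‖f u‖ - ‖g u‖)| ≤ A + K * (B + D) :=
        h1.trans (by gcongr)
      calc _ ≤ (A + K * (B + D)) ^ 2 := pow_le_pow_left₀ (abs_nonneg _) h3 2
        _ ≤ _ := by
          nlinarith [sq_nonneg (A - K * B), sq_nonneg (A - K * D),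
            sq_nonneg (K * B - K * D)]
    · have e1 := gagliardoSq_le_sq hh le_rfl
      have e2 := gagliardoSq_le_sq hf hfM
      have e3 := gagliardoSq_le_sq hg hgM
      calc _ ≤ ENNReal.ofReal 3 * ENNReal.ofReal (N ^ 2) +
            (ENNReal.ofReal (3 * K ^ 2) * ENNReal.ofReal (M ^ 2) +
              ENNReal.ofReal (3 * K ^ 2) * ENNReal.ofReal (M ^ 2)) := by gcongr
        _ = _ := by
          rw [← ENNReal.ofReal_mul (by positivity), ← ENNReal.ofReal_mul (by positivity),
            ← ENNReal.ofReal_add (by positivity) (by positivity),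
            ← ENNReal.ofReal_add (by positivity) (by positivity)]
          congr 1
          rw [hK]
          ring
  have hsq : Real.sqrt (gagliardoSq s ((fun u : ℝ => ‖f u‖) - fun u : ℝ => ‖g u‖)).toReal ≤
      N * Real.sqrt (3 + 6 * (sobolevConst s * M / c) ^ 2) := by
    refine (Real.sqrt_le_sqrt (ENNReal.toReal_le_of_le_ofReal (by positivity) hgag)).trans ?_
    rw [Real.sqrt_mul (by positivity), Real.sqrt_sq hN0]
  have hL2' : Real.sqrt (∫ u in Ioc (0:ℝ) 1, ‖(f - g) u‖ ^ 2) ≤ N :=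
    le_add_of_nonneg_right (Real.sqrt_nonneg _)
  have := Real.sqrt_le_sqrt hL2
  rw [Hs0Norm]
  linarith

end
end
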